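/- arXiv:2504.11768 — 2 statements merged into one kernel-verified Lean document; each statement's English description precedes it below -/
import Mathlib

section
/- Let (T, R, A) be weakly G-quasiapproximable or weakly G-approximable. Then there exists an integer B > 0 such that for every integer i and every K ∈ T^c ∩ R_i there is a distinguished triangle E → K → D → ΣE with E ∈ G^{[-B-i, B-i]} and D ∈ R_{i+1}. If (T, R, A) is moreover G-quasiapproximable or G-approximable, B can be chosen so that one may take E ∈ G^{[-B-i, B-i]}_B. -/
namespace GApprox

open CategoryTheory CategoryTheory.Limits CategoryTheory.Pretriangulated

universe w v u

variable (C : Type u) [Category.{v} C] [HasZeroObject C] [HasShift C ℤ]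
  [Preadditive C] [∀ n : ℤ, (shiftFunctor C n).Additive] [Pretriangulated C]
  [HasCoproducts.{v} C]

/-- The right orthogonal of a class of objects. -/
def rOrth (A : Set C) : Set C := {X | ∀ a ∈ A, ∀ f : a ⟶ X, f = 0}

/-- The left orthogonal of a class of objects. -/
def lOrth (A : Set C) : Set C := {X | ∀ a ∈ A, ∀ f : X ⟶ a, f = 0}

/-- `Hom(A, B) = 0`. -/
def homZero (A B : Set C) : Prop := ∀ a ∈ A, ∀ b ∈ B, ∀ f : a ⟶ b, f = 0

/-- The star operation `A ⋆ B`: objects `Y` admitting a distinguished triangle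
`X ⟶ Y ⟶ Z ⟶ ΣX` with `X ∈ A` and `Z ∈ B`. -/
def starSet (A B : Set C) : Set C :=
  {Y | ∃ (X Z : C) (f : X ⟶ Y) (g : Y ⟶ Z) (h : Z ⟶ X⟦(1 : ℤ)⟧),
    Triangle.mk f g h ∈ (distTriang C) ∧ X ∈ A ∧ Z ∈ B}

/-- The (strictly full) shift `Σⁿ A` of a class of objects. -/
def shiftSet (n : ℤ) (A : Set C) : Set C :=
  {X | ∃ a ∈ A, Nonempty (X ≅ (shiftFunctor C n).obj a)}

/-- An object is compact if any map to a coproduct factors through a finite subcoproduct. -/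
def IsCompactObj (X : C) : Prop :=
  ∀ (α : Type v) (f : α → C) (g : X ⟶ ∐ f),
    ∃ (s : Finset α) (h : X ⟶ ∐ (fun i : {a : α // a ∈ s} => f i.1)),
      g = h ≫ Sigma.desc (fun i => Sigma.ι f i.1)

/-- The class of compact objects `T^c`. -/
def compacts : Set C := {X | IsCompactObj C X}

/-- The category is compactly generated. -/
def CompactlyGenerated : Prop :=
  ∀ X : C, (∀ K ∈ compacts C, ∀ f : K ⟶ X, f = 0) → IsZero X

/-- Closure under direct summands (retracts), `smd`. -/
def smd (A : Set C) : Set C :=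
  {X | ∃ Y ∈ A, ∃ (i : X ⟶ Y) (r : Y ⟶ X), i ≫ r = 𝟙 X}

/-- Closure of a class of objects under finite direct sums and extensions (`coprod`). -/
inductive extClosure (U : Set C) : C → Prop
  | of {X : C} : X ∈ U → extClosure U X
  | zero {X : C} : IsZero X → extClosure U X
  | ext {X Y Z : C} (f : X ⟶ Y) (g : Y ⟶ Z) (h : Z ⟶ X⟦(1 : ℤ)⟧) :
      Triangle.mk f g h ∈ (distTriang C) → extClosure U X → extClosure U Z → extClosure U Y

/-- Closure of a class of objects under arbitrary coproducts, extensions and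
direct summands. -/
inductive bigClosure (U : Set C) : C → Prop
  | of {X : C} : X ∈ U → bigClosure U X
  | zero {X : C} : IsZero X → bigClosure U X
  | coprod {α : Type v} (f : α → C) :
      (∀ i, bigClosure U (f i)) → ∀ {X : C}, (X ≅ ∐ f) → bigClosure U X
  | ext {X Y Z : C} (f : X ⟶ Y) (g : Y ⟶ Z) (h : Z ⟶ X⟦(1 : ℤ)⟧) :
      Triangle.mk f g h ∈ (distTriang C) → bigClosure U X → bigClosure U Z → bigClosure U Y
  | retract {X Y : C} (i : X ⟶ Y) (r : Y ⟶ X) :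
      i ≫ r = 𝟙 X → bigClosure U Y → bigClosure U X

/-- Closure of a class of objects under finite direct sums, `add`. -/
def addClosure (U : Set C) : Set C :=
  {X | ∃ (n : ℕ) (f : ULift.{v} (Fin n) → C), (∀ i, f i ∈ U) ∧ Nonempty (X ≅ ∐ f)}

/-- Closure of a class of objects under arbitrary coproducts, `Add`. -/
def bigAddClosure (U : Set C) : Set C :=
  {X | ∃ (α : Type v) (f : α → C), (∀ i, f i ∈ U) ∧ Nonempty (X ≅ ∐ f)}

/-- `coprod_n(U)`. -/
def coprodPow (U : Set C) : ℕ → Set C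
  | 0 => {X | IsZero X}
  | n + 1 => starSet C (addClosure C U) (coprodPow U n)

/-- `Coprod_n(U)`. -/
def coprodPowBig (U : Set C) : ℕ → Set C
  | 0 => {X | IsZero X}
  | n + 1 => starSet C (bigAddClosure C U) (coprodPowBig U n)

/-- `G[a,b] = ∪ { G^m : a ≤ m ≤ b }`. -/
def unionIcc (G : ℤ → Set C) (a b : ℤ) : Set C := ⋃ m ∈ Set.Icc a b, G m

/-- `G(-∞,b] = ∪ { G^m : m ≤ b }`. -/
def unionIic (G : ℤ → Set C) (b : ℤ) : Set C := ⋃ m ∈ Set.Iic b, G m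

/-- `G(-∞,∞) = ∪ { G^m : m ∈ ℤ }`. -/
def unionAll (G : ℤ → Set C) : Set C := ⋃ m : ℤ, G m

/-- `G^{[a,b]} = smd(coprod(G[a,b]))`. -/
def gInt (G : ℤ → Set C) (a b : ℤ) : Set C :=
  smd C {X | extClosure C (unionIcc C G a b) X}

/-- `G^{(-∞,b]} = smd(coprod(G(-∞,b]))`. -/
def gIic (G : ℤ → Set C) (b : ℤ) : Set C :=
  smd C {X | extClosure C (unionIic C G b) X}

/-- `G^{[a,b]}_k = smd(coprod_k(G[a,b]))`. -/
def gIntPow (G : ℤ → Set C) (a b k : ℤ) : Set C :=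
  smd C (coprodPow C (unionIcc C G a b) k.toNat)

/-- `Ḡ^{[a,b]}`. -/
def gBarInt (G : ℤ → Set C) (a b : ℤ) : Set C :=
  {X | bigClosure C (unionIcc C G a b) X}

/-- `Ḡ^{(-∞,b]}`. -/
def gBarIic (G : ℤ → Set C) (b : ℤ) : Set C :=
  {X | bigClosure C (unionIic C G b) X}

/-- `Ḡ^{[a,b]}_k = smd(Coprod_k(G[a,b]))`. -/
def gBarIntPow (G : ℤ → Set C) (a b k : ℤ) : Set C :=
  smd C (coprodPowBig C (unionIcc C G a b) k.toNat)

/-- `M^G_n := G^{(-∞,-n]}`. -/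
def MG (G : ℤ → Set C) (n : ℤ) : Set C := gIic C G (-n)

/-- `R^G_n := ⊥((M^G_n)^⊥)`, orthogonals taken in the whole category. -/
def RG (G : ℤ → Set C) (n : ℤ) : Set C := lOrth C (rOrth C (MG C G n))

/-- A pre-generating sequence. -/
structure IsPreGenSeq (G : ℤ → Set C) : Prop where
  compact : ∀ i : ℤ, G i ⊆ compacts C
  generates : smd C {X | extClosure C (unionAll C G) X} = compacts C

/-- A generating sequence. -/
structure IsGenSeq (G : ℤ → Set C) extends IsPreGenSeq C G : Prop where
  shift_cond : ∀ n : ℤ,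
    shiftSet C (-1) (G n) ∪ G n ∪ shiftSet C 1 (G n) ⊆ gInt C G (n - 1) (n + 1)

/-- A finite generating sequence. -/
structure IsFinGenSeq (G : ℤ → Set C) extends IsGenSeq C G : Prop where
  finite : ∀ i : ℤ, (G i).Finite

/-- ℕ-equivalence of generating sequences. -/
def GenSeqNEquiv (G G' : ℤ → Set C) : Prop :=
  ∃ N : ℤ, 0 ≤ N ∧ (∀ n : ℤ, G' n ⊆ gInt C G (n - N) (n + N)) ∧
    ∀ n : ℤ, G n ⊆ gInt C G' (n - N) (n + N)

/-- ℕ-equivalence of (extended good) metrics. -/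
def MetricNEquiv (M N : ℤ → Set C) : Prop :=
  ∃ n : ℤ, 0 ≤ n ∧ (∀ i : ℤ, M (i + n) ⊆ N i) ∧ ∀ i : ℤ, N (i + n) ⊆ M i

/-- An extended good metric. -/
structure IsExtGoodMetric (M : ℤ → Set C) : Prop where
  zero_mem : ∀ (n : ℤ) (X : C), IsZero X → X ∈ M n
  iso_closed : ∀ (n : ℤ) ⦃X Y : C⦄, (X ≅ Y) → X ∈ M n → Y ∈ M n
  star_subset : ∀ n : ℤ, starSet C (M n) (M n) ⊆ M n
  shift_one : ∀ n : ℤ, shiftSet C 1 (M (n + 1)) ⊆ M n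
  antitone : ∀ n : ℤ, M (n + 1) ⊆ M n
  shift_neg_one : ∀ n : ℤ, shiftSet C (-1) (M (n + 1)) ⊆ M n

/-- An orthogonal metric. -/
structure IsOrthMetric (M : ℤ → Set C) extends IsExtGoodMetric C M : Prop where
  orth : ∀ n : ℤ, lOrth C (rOrth C (M n)) = M n

/-- The closure of the compacts `T̄^c := ∩ₙ T^c ⋆ Rₙ`. -/
def closCompacts (Rm : ℤ → Set C) : Set C := ⋂ n : ℤ, starSet C (compacts C) (Rm n)

/-- `(T, R, A)` is `G`-preapproximable. -/
structure IsGPreApprox (G Rm : ℤ → Set C) (A : ℤ) : Prop where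
  orthMetric : IsOrthMetric C Rm
  A_pos : 0 < A
  cond0 : ∀ i : ℤ, MG C G i ⊆ ⋃ n ∈ {n : ℤ | |n| ≤ A}, shiftSet C n (MG C G (i + 1))
  cond1 : ∀ i : ℤ, MG C G (i + A) ⊆ Rm i ∩ compacts C
  cond2 : ∀ n : ℤ, ∃ N : ℤ, ∀ i : ℤ, N ≤ i → homZero C (G n) (Rm i)

/-- There is a distinguished triangle `E ⟶ F ⟶ D ⟶ ΣE` with `E ∈ S` and `D ∈ D`. -/
def approxTriangle (F : C) (S D : Set C) : Prop :=
  ∃ (E Dd : C) (f : E ⟶ F) (g : F ⟶ Dd) (h : Dd ⟶ E⟦(1 : ℤ)⟧),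
    Triangle.mk f g h ∈ (distTriang C) ∧ E ∈ S ∧ Dd ∈ D

/-- `(T, R, A)` is weakly `G`-approximable. -/
structure IsWeakGApprox (G Rm : ℤ → Set C) (A : ℤ) extends IsGPreApprox C G Rm A : Prop where
  hom_vanish : ∀ n i : ℤ, A ≤ n + i → homZero C (G n) (Rm i)
  approx : ∀ i : ℤ, ∀ F ∈ Rm i,
    approxTriangle C F (gBarInt C G (-A - i) (A - i)) (Rm (i + 1))

/-- `(T, R, A)` is `G`-approximable. -/
structure IsGApprox (G Rm : ℤ → Set C) (A : ℤ) extends IsWeakGApprox C G Rm A : Prop where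
  approx' : ∀ i : ℤ, ∀ F ∈ Rm i,
    approxTriangle C F (gBarIntPow C G (-A - i) (A - i) A) (Rm (i + 1))

/-- `(T, R, A)` is weakly `G`-quasiapproximable. -/
structure IsWeakGQuasiApprox (G Rm : ℤ → Set C) (A : ℤ) extends IsGPreApprox C G Rm A : Prop where
  hom_vanish : ∀ n i : ℤ, A ≤ n + i → homZero C (G n) (Rm i)
  approx : ∀ i : ℤ, ∀ F ∈ Rm i ∩ closCompacts C Rm,
    approxTriangle C F (gBarInt C G (-A - i) (A - i)) (Rm (i + 1) ∩ closCompacts C Rm)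

/-- `(T, R, A)` is `G`-quasiapproximable. -/
structure IsGQuasiApprox (G Rm : ℤ → Set C) (A : ℤ) extends IsWeakGQuasiApprox C G Rm A : Prop where
  approx' : ∀ i : ℤ, ∀ F ∈ Rm i ∩ closCompacts C Rm,
    approxTriangle C F (gBarIntPow C G (-A - i) (A - i) A) (Rm (i + 1) ∩ closCompacts C Rm)

/-- The coproduct of a sequence of objects. -/
noncomputable def seqCoprod (E : ℕ → C) : C := ∐ (fun n : ULift.{v} ℕ => E n.down)

/-- The canonical inclusion into the coproduct of a sequence. -/
noncomputable def seqInj (E : ℕ → C) (n : ℕ) : E n ⟶ seqCoprod C E :=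
  Sigma.ι (fun n : ULift.{v} ℕ => E n.down) (ULift.up n)

/-- The map `1 - shift` on the coproduct of a sequence. -/
noncomputable def oneMinusShift (E : ℕ → C) (e : ∀ n, E n ⟶ E (n + 1)) :
    seqCoprod C E ⟶ seqCoprod C E :=
  Sigma.desc (fun n => seqInj C E n.down - e n.down ≫ seqInj C E (n.down + 1))

/-- `H`, equipped with `π`, `δ`, is a homotopy colimit of the sequence `E`. -/
def IsHocolim (E : ℕ → C) (e : ∀ n, E n ⟶ E (n + 1)) (H : C)
    (π : seqCoprod C E ⟶ H) (δ : H ⟶ (seqCoprod C E)⟦(1 : ℤ)⟧) : Prop :=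
  Triangle.mk (oneMinusShift C E e) π δ ∈ (distTriang C)

/-- A single compact generator. -/
def IsCompactGenerator (G₀ : C) : Prop :=
  IsCompactObj C G₀ ∧ ∀ X : C, (∀ n : ℤ, ∀ f : (shiftFunctor C n).obj G₀ ⟶ X, f = 0) → IsZero X

/-- The strictly full subcategory `{Σʲ G₀}`. -/
def singletonShift (G₀ : C) (j : ℤ) : Set C :=
  {X | Nonempty (X ≅ (shiftFunctor C j).obj G₀)}

/-- The generating sequence `Gⁿ := {Σ⁻ⁿ G₀}`. -/
def genSeqNeg (G₀ : C) (n : ℤ) : Set C := singletonShift C G₀ (-n)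

/-- The generating sequence `Gⁿ := {Σⁿ G₀}`. -/
def genSeqPos (G₀ : C) (n : ℤ) : Set C := singletonShift C G₀ n

set_option linter.unusedSectionVars false
section Aux1
variable {C}

/-! ### Triangles in component form -/

lemma tri_yon2 {X Y Z W : C} {f : X ⟶ Y} {g : Y ⟶ Z} {h : Z ⟶ X⟦(1 : ℤ)⟧}
    (hT : Triangle.mk f g h ∈ (distTriang C)) (k : Y ⟶ W) (hk : f ≫ k = 0) :
    ∃ l : Z ⟶ W, k = g ≫ l :=
  Triangle.yoneda_exact₂ _ hT k hk

lemma tri_yon3 {X Y Z W : C} {f : X ⟶ Y} {g : Y ⟶ Z} {h : Z ⟶ X⟦(1 : ℤ)⟧}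
    (hT : Triangle.mk f g h ∈ (distTriang C)) (k : Z ⟶ W) (hk : g ≫ k = 0) :
    ∃ l : X⟦(1 : ℤ)⟧ ⟶ W, k = h ≫ l :=
  Triangle.yoneda_exact₃ _ hT k hk

lemma tri_rot {X Y Z : C} {f : X ⟶ Y} {g : Y ⟶ Z} {h : Z ⟶ X⟦(1 : ℤ)⟧}
    (hT : Triangle.mk f g h ∈ (distTriang C)) :
    Triangle.mk g h (-f⟦(1 : ℤ)⟧') ∈ (distTriang C) :=
  rot_of_distTriang _ hT

lemma tri_yon1 {X Y Z W : C} {f : X ⟶ Y} {g : Y ⟶ Z} {h : Z ⟶ X⟦(1 : ℤ)⟧}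
    (hT : Triangle.mk f g h ∈ (distTriang C)) (k : X⟦(1 : ℤ)⟧ ⟶ W) (hk : h ≫ k = 0) :
    ∃ l : Y⟦(1 : ℤ)⟧ ⟶ W, k = f⟦(1 : ℤ)⟧' ≫ l := by
  obtain ⟨l, hl⟩ := tri_yon3 (tri_rot hT) k hk
  exact ⟨-l, by rw [hl, Preadditive.neg_comp, Preadditive.comp_neg]⟩

lemma tri_yon2s {X Y Z W : C} {f : X ⟶ Y} {g : Y ⟶ Z} {h : Z ⟶ X⟦(1 : ℤ)⟧}
    (hT : Triangle.mk f g h ∈ (distTriang C)) (k : Y⟦(1 : ℤ)⟧ ⟶ W)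
    (hk : f⟦(1 : ℤ)⟧' ≫ k = 0) :
    ∃ l : Z⟦(1 : ℤ)⟧ ⟶ W, k = g⟦(1 : ℤ)⟧' ≫ l := by
  obtain ⟨l, hl⟩ := tri_yon3 (tri_rot (tri_rot hT)) k (by
      rw [Preadditive.neg_comp, hk, neg_zero])
  exact ⟨-l, by rw [hl, Preadditive.neg_comp, Preadditive.comp_neg]⟩

lemma tri_coy2 {X Y Z W : C} {f : X ⟶ Y} {g : Y ⟶ Z} {h : Z ⟶ X⟦(1 : ℤ)⟧}
    (hT : Triangle.mk f g h ∈ (distTriang C)) (k : W ⟶ Y) (hk : k ≫ g = 0) :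
    ∃ l : W ⟶ X, k = l ≫ f :=
  Triangle.coyoneda_exact₂ _ hT k hk

lemma tri_coy3 {X Y Z W : C} {f : X ⟶ Y} {g : Y ⟶ Z} {h : Z ⟶ X⟦(1 : ℤ)⟧}
    (hT : Triangle.mk f g h ∈ (distTriang C)) (k : W ⟶ Z) (hk : k ≫ h = 0) :
    ∃ l : W ⟶ Y, k = l ≫ g :=
  Triangle.coyoneda_exact₃ _ hT k hk

lemma tri_12 {X Y Z : C} {f : X ⟶ Y} {g : Y ⟶ Z} {h : Z ⟶ X⟦(1 : ℤ)⟧}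
    (hT : Triangle.mk f g h ∈ (distTriang C)) : f ≫ g = 0 :=
  comp_distTriang_mor_zero₁₂ _ hT

lemma tri_23 {X Y Z : C} {f : X ⟶ Y} {g : Y ⟶ Z} {h : Z ⟶ X⟦(1 : ℤ)⟧}
    (hT : Triangle.mk f g h ∈ (distTriang C)) : g ≫ h = 0 :=
  comp_distTriang_mor_zero₂₃ _ hT

lemma tri_31 {X Y Z : C} {f : X ⟶ Y} {g : Y ⟶ Z} {h : Z ⟶ X⟦(1 : ℤ)⟧}
    (hT : Triangle.mk f g h ∈ (distTriang C)) : h ≫ f⟦(1 : ℤ)⟧' = 0 :=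
  comp_distTriang_mor_zero₃₁ _ hT

lemma tri_mor1 {X Y Z X' Y' Z' : C} {f : X ⟶ Y} {g : Y ⟶ Z} {h : Z ⟶ X⟦(1 : ℤ)⟧}
    {f' : X' ⟶ Y'} {g' : Y' ⟶ Z'} {h' : Z' ⟶ X'⟦(1 : ℤ)⟧}
    (hT : Triangle.mk f g h ∈ (distTriang C)) (hT' : Triangle.mk f' g' h' ∈ (distTriang C))
    (b : Y ⟶ Y') (c : Z ⟶ Z') (w : g ≫ c = b ≫ g') :
    ∃ a : X ⟶ X', f ≫ b = a ≫ f' ∧ h ≫ a⟦(1 : ℤ)⟧' = c ≫ h' :=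
  complete_distinguished_triangle_morphism₁ _ _ hT hT' b c w

lemma tri_mor2 {X Y Z X' Y' Z' : C} {f : X ⟶ Y} {g : Y ⟶ Z} {h : Z ⟶ X⟦(1 : ℤ)⟧}
    {f' : X' ⟶ Y'} {g' : Y' ⟶ Z'} {h' : Z' ⟶ X'⟦(1 : ℤ)⟧}
    (hT : Triangle.mk f g h ∈ (distTriang C)) (hT' : Triangle.mk f' g' h' ∈ (distTriang C))
    (a : X ⟶ X') (c : Z ⟶ Z') (w : h ≫ a⟦(1 : ℤ)⟧' = c ≫ h') :
    ∃ b : Y ⟶ Y', f ≫ b = a ≫ f' ∧ g ≫ c = b ≫ g' :=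
  complete_distinguished_triangle_morphism₂ _ _ hT hT' a c w

lemma tri_mor3 {X Y Z X' Y' Z' : C} {f : X ⟶ Y} {g : Y ⟶ Z} {h : Z ⟶ X⟦(1 : ℤ)⟧}
    {f' : X' ⟶ Y'} {g' : Y' ⟶ Z'} {h' : Z' ⟶ X'⟦(1 : ℤ)⟧}
    (hT : Triangle.mk f g h ∈ (distTriang C)) (hT' : Triangle.mk f' g' h' ∈ (distTriang C))
    (a : X ⟶ X') (b : Y ⟶ Y') (w : f ≫ b = a ≫ f') :
    ∃ c : Z ⟶ Z', g ≫ c = b ≫ g' ∧ h ≫ a⟦(1 : ℤ)⟧' = c ≫ h' :=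
  complete_distinguished_triangle_morphism _ _ hT hT' a b w

lemma tri_iso2 {X Y Z : C} {f : X ⟶ Y} {g : Y ⟶ Z} {h : Z ⟶ X⟦(1 : ℤ)⟧}
    (hT : Triangle.mk f g h ∈ (distTriang C)) (b : Y ⟶ Y) (h1 : f ≫ b = f)
    (h2 : g = b ≫ g) : IsIso b := by
  let φ : Triangle.mk f g h ⟶ Triangle.mk f g h :=
    { hom₁ := 𝟙 X
      hom₂ := b
      hom₃ := 𝟙 Z
      comm₁ := by change f ≫ b = 𝟙 X ≫ f; rw [h1, Category.id_comp]
      comm₂ := by change g ≫ 𝟙 Z = b ≫ g; rw [← h2, Category.comp_id]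
      comm₃ := by
        change h ≫ (𝟙 X)⟦(1 : ℤ)⟧' = 𝟙 Z ≫ h
        rw [CategoryTheory.Functor.map_id, Category.comp_id, Category.id_comp] }
  exact isIso₂_of_isIso₁₃ φ hT hT (by change IsIso (𝟙 X); infer_instance)
    (by change IsIso (𝟙 Z); infer_instance)

/-- Transport of a distinguished triangle along isomorphisms of the three objects. -/
lemma tri_congr {X Y Z X' Y' Z' : C} {f : X ⟶ Y} {g : Y ⟶ Z} {h : Z ⟶ X⟦(1 : ℤ)⟧}
    (hT : Triangle.mk f g h ∈ (distTriang C)) (a : X ≅ X') (b : Y ≅ Y') (c : Z ≅ Z') :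
    Triangle.mk (a.inv ≫ f ≫ b.hom) (b.inv ≫ g ≫ c.hom) (c.inv ≫ h ≫ a.hom⟦(1 : ℤ)⟧')
      ∈ (distTriang C) := by
  refine isomorphic_distinguished _ hT _ (Triangle.isoMk _ _ a.symm b.symm c.symm ?_ ?_ ?_)
  · change (a.inv ≫ f ≫ b.hom) ≫ b.inv = a.inv ≫ f
    simp
  · change (b.inv ≫ g ≫ c.hom) ≫ c.inv = b.inv ≫ g
    simp
  · change (c.inv ≫ h ≫ a.hom⟦(1 : ℤ)⟧') ≫ a.inv⟦(1 : ℤ)⟧' = c.inv ≫ h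
    simp [← Functor.map_comp]

/-- The direct sum of two distinguished triangles. -/
lemma tri_biprod {X Y Z X' Y' Z' : C} {f : X ⟶ Y} {g : Y ⟶ Z} {h : Z ⟶ X⟦(1 : ℤ)⟧}
    {f' : X' ⟶ Y'} {g' : Y' ⟶ Z'} {h' : Z' ⟶ X'⟦(1 : ℤ)⟧}
    (hT : Triangle.mk f g h ∈ (distTriang C)) (hT' : Triangle.mk f' g' h' ∈ (distTriang C)) :
    ∃ (f₀ : X ⊞ X' ⟶ Y ⊞ Y') (g₀ : Y ⊞ Y' ⟶ Z ⊞ Z') (h₀ : Z ⊞ Z' ⟶ (X ⊞ X')⟦(1 : ℤ)⟧),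
      Triangle.mk f₀ g₀ h₀ ∈ (distTriang C) := by
  let T : WalkingPair → Triangle C := fun j =>
    WalkingPair.casesOn j (Triangle.mk f g h) (Triangle.mk f' g' h')
  have key := productTriangle_distinguished T (by
    rintro (_ | _)
    · exact hT
    · exact hT')
  have e : ∀ F : WalkingPair → C, Nonempty ((∏ᶜ F) ≅ (F WalkingPair.left ⊞ F WalkingPair.right)) := by
    intro F
    refine ⟨?_ ≪≫ (biprod.isoProd _ _).symm⟩
    exact Limits.HasLimit.isoOfNatIso (diagramIsoPair _)
  obtain ⟨a⟩ := e (fun j => (T j).obj₁)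
  obtain ⟨b⟩ := e (fun j => (T j).obj₂)
  obtain ⟨c⟩ := e (fun j => (T j).obj₃)
  exact ⟨_, _, _, tri_congr (f := (productTriangle T).mor₁) (g := (productTriangle T).mor₂)
    (h := (productTriangle T).mor₃) key a b c⟩

lemma star_iso {P Q : Set C} {Y Y' : C} (e : Y ≅ Y') (hY : Y ∈ starSet C P Q) :
    Y' ∈ starSet C P Q := by
  obtain ⟨X, Z, f, g, h, hT, hX, hZ⟩ := hY
  exact ⟨X, Z, _, _, _, tri_congr hT (Iso.refl X) e (Iso.refl Z), hX, hZ⟩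

lemma star_mono {P Q P' Q' : Set C} (h1 : P ⊆ P') (h2 : Q ⊆ Q') :
    starSet C P Q ⊆ starSet C P' Q' := by
  rintro Y ⟨X, Z, f, g, h, hT, hX, hZ⟩
  exact ⟨X, Z, f, g, h, hT, h1 hX, h2 hZ⟩

lemma tri_zero_left {O Y : C} (hO : IsZero O) :
    Triangle.mk (0 : O ⟶ Y) (𝟙 Y) (0 : Y ⟶ O⟦(1 : ℤ)⟧) ∈ (distTriang C) := by
  have := tri_congr (contractible_distinguished₁ Y) ((isZero_zero C).iso hO) (Iso.refl Y) (Iso.refl Y)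
  convert this using 1
  congr 1 <;> simp

lemma tri_zero_right {O Y : C} (hO : IsZero O) :
    Triangle.mk (𝟙 Y) (0 : Y ⟶ O) (0 : O ⟶ Y⟦(1 : ℤ)⟧) ∈ (distTriang C) := by
  have := tri_congr (contractible_distinguished Y) (Iso.refl Y) (Iso.refl Y) ((isZero_zero C).iso hO)
  convert this using 1
  congr 1 <;> simp

lemma tri_biprod_std (X Y : C) :
    Triangle.mk (biprod.inl : X ⟶ X ⊞ Y) (biprod.snd : X ⊞ Y ⟶ Y) (0 : Y ⟶ X⟦(1 : ℤ)⟧)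
      ∈ (distTriang C) :=
  binaryBiproductTriangle_distinguished X Y

/-! ### smd -/

lemma smd_self {P : Set C} : P ⊆ smd C P := fun X hX => ⟨X, hX, 𝟙 X, 𝟙 X, by simp⟩

lemma smd_mono {P Q : Set C} (h : P ⊆ Q) : smd C P ⊆ smd C Q := by
  rintro X ⟨Y, hY, i, r, w⟩
  exact ⟨Y, h hY, i, r, w⟩

lemma smd_retract {P : Set C} {X Y : C} (hY : Y ∈ smd C P) (i : X ⟶ Y) (r : Y ⟶ X)
    (w : i ≫ r = 𝟙 X) : X ∈ smd C P := by
  obtain ⟨Z, hZ, i', r', w'⟩ := hY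
  refine ⟨Z, hZ, i ≫ i', r' ≫ r, ?_⟩
  rw [Category.assoc, reassoc_of% w', w]

lemma smd_iso {P : Set C} {X Y : C} (e : Y ≅ X) (hY : Y ∈ smd C P) : X ∈ smd C P :=
  smd_retract hY e.inv e.hom e.inv_hom_id

lemma smd_smd {P : Set C} : smd C (smd C P) ⊆ smd C P := by
  rintro X ⟨Y, hY, i, r, w⟩
  exact smd_retract hY i r w

lemma star_smd {P Q : Set C} : starSet C (smd C P) (smd C Q) ⊆ smd C (starSet C P Q) := by
  rintro Y ⟨X, Z, f, g, h, hT, ⟨X1, hX1, iX, rX, wX⟩, ⟨Z1, hZ1, iZ, rZ, wZ⟩⟩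
  obtain ⟨Y1, f1, g1, hT1⟩ := distinguished_cocone_triangle₂ (rZ ≫ h ≫ iX⟦(1 : ℤ)⟧')
  obtain ⟨b, hb1, hb2⟩ := tri_mor2 hT hT1 iX iZ (by rw [reassoc_of% wZ])
  obtain ⟨d, hd1, hd2⟩ := tri_mor2 hT1 hT rX rZ (by
    simp only [Category.assoc, ← Functor.map_comp, wX, CategoryTheory.Functor.map_id, Category.comp_id])
  have : IsIso (b ≫ d) := tri_iso2 hT (b ≫ d)
    (by rw [reassoc_of% hb1, hd1, reassoc_of% wX])
    (by rw [Category.assoc, ← hd2, ← reassoc_of% hb2, wZ, Category.comp_id])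
  refine ⟨Y1, ⟨X1, Z1, _, _, _, hT1, hX1, hZ1⟩, b, d ≫ inv (b ≫ d), ?_⟩
  rw [← Category.assoc, IsIso.hom_inv_id]

end Aux1

section Aux2
variable {C}

/-! ### Maps that are equivalences modulo a class -/

/-- `f` looks like an equivalence from the point of view of the right orthogonal of `S`. -/
def EqMod (S : Set C) {E K : C} (f : E ⟶ K) : Prop :=
  ∀ Y ∈ rOrth C S, (∀ k : K ⟶ Y, f ≫ k = 0 → k = 0) ∧
    (∀ e : E⟦(1 : ℤ)⟧ ⟶ Y, ∃ k : K⟦(1 : ℤ)⟧ ⟶ Y, e = f⟦(1 : ℤ)⟧' ≫ k)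

lemma eqMod_of_cone {S : Set C} {X Y Z : C} {f : X ⟶ Y} {g : Y ⟶ Z} {h : Z ⟶ X⟦(1 : ℤ)⟧}
    (hT : Triangle.mk f g h ∈ (distTriang C)) (hZ : Z ∈ S) : EqMod S f := by
  intro W hW
  constructor
  · intro k hk
    obtain ⟨l, rfl⟩ := tri_yon2 hT k hk
    rw [hW Z hZ l, comp_zero]
  · intro e
    exact tri_yon1 hT e (hW Z hZ _)

lemma cone_of_eqMod {S : Set C} (hS : lOrth C (rOrth C S) = S) {X Y Z : C}
    {f : X ⟶ Y} {g : Y ⟶ Z} {h : Z ⟶ X⟦(1 : ℤ)⟧}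
    (hT : Triangle.mk f g h ∈ (distTriang C)) (hf : EqMod S f) : Z ∈ S := by
  rw [← hS]
  intro W hW k
  have h0 : g ≫ k = 0 := (hf W hW).1 _ (by rw [← Category.assoc, tri_12 hT, zero_comp])
  obtain ⟨l, rfl⟩ := tri_yon3 hT k h0
  obtain ⟨m, rfl⟩ := (hf W hW).2 l
  rw [← Category.assoc, tri_31 hT, zero_comp]

lemma eqMod_id {S : Set C} (X : C) : EqMod S (𝟙 X) := by
  intro Y hY
  refine ⟨fun k hk => by simpa using hk, fun e => ⟨e, by simp⟩⟩

lemma eqMod_comp {S : Set C} {X Y Z : C} {f : X ⟶ Y} {g : Y ⟶ Z} (hf : EqMod S f)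
    (hg : EqMod S g) : EqMod S (f ≫ g) := by
  intro W hW
  refine ⟨fun k hk => (hg W hW).1 _ ((hf W hW).1 _ (by simpa using hk)), fun e => ?_⟩
  obtain ⟨k, rfl⟩ := (hf W hW).2 e
  obtain ⟨l, rfl⟩ := (hg W hW).2 k
  exact ⟨l, by simp⟩

lemma eqMod_mono {S S' : Set C} (h : S ⊆ S') {X Y : C} {f : X ⟶ Y} (hf : EqMod S f) :
    EqMod S' f := fun W hW => hf W (fun a ha => hW a (h ha))

/-- Two out of three (middle term) for `EqMod`. -/
lemma eqMod_mid {S : Set C} {X Y Z X' Y' Z' : C} {f : X ⟶ Y} {g : Y ⟶ Z} {h : Z ⟶ X⟦(1 : ℤ)⟧}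
    {f' : X' ⟶ Y'} {g' : Y' ⟶ Z'} {h' : Z' ⟶ X'⟦(1 : ℤ)⟧}
    (hT : Triangle.mk f g h ∈ (distTriang C)) (hT' : Triangle.mk f' g' h' ∈ (distTriang C))
    {a : X ⟶ X'} {b : Y ⟶ Y'} {c : Z ⟶ Z'} (w1 : f ≫ b = a ≫ f') (w2 : g ≫ c = b ≫ g')
    (w3 : h ≫ a⟦(1 : ℤ)⟧' = c ≫ h') (ha : EqMod S a) (hc : EqMod S c) : EqMod S b := by
  intro W hW
  constructor
  · intro k hk
    have h1 : f' ≫ k = 0 := (ha W hW).1 _ (by rw [← Category.assoc, ← w1, Category.assoc, hk,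
      comp_zero])
    obtain ⟨z, rfl⟩ := tri_yon2 hT' k h1
    have h2 : g ≫ c ≫ z = 0 := by rw [reassoc_of% w2, hk]
    obtain ⟨x, hx⟩ := tri_yon3 hT _ h2
    obtain ⟨x2, rfl⟩ := (ha W hW).2 x
    have h3 : z - h' ≫ x2 = 0 := (hc W hW).1 _ (by
      rw [Preadditive.comp_sub, hx, reassoc_of% w3, sub_self])
    rw [sub_eq_zero.1 h3, ← Category.assoc, tri_23 hT', zero_comp]
  · intro e
    obtain ⟨x2, hx2⟩ := (ha W hW).2 (f⟦(1 : ℤ)⟧' ≫ e)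
    have h1 : h' ≫ x2 = 0 := (hc W hW).1 _ (by
      rw [← Category.assoc, ← w3, Category.assoc, ← hx2, ← Category.assoc, tri_31 hT, zero_comp])
    obtain ⟨y2, rfl⟩ := tri_yon1 hT' x2 h1
    have h2 : f⟦(1 : ℤ)⟧' ≫ (e - b⟦(1 : ℤ)⟧' ≫ y2) = 0 := by
      rw [Preadditive.comp_sub, hx2, ← Category.assoc, ← Category.assoc, ← Functor.map_comp,
        ← Functor.map_comp, w1, sub_self]
    obtain ⟨z1, hz1⟩ := tri_yon2s hT _ h2
    obtain ⟨z2, rfl⟩ := (hc W hW).2 z1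
    refine ⟨y2 + g'⟦(1 : ℤ)⟧' ≫ z2, ?_⟩
    rw [← Category.assoc, ← Functor.map_comp, w2, Functor.map_comp, Category.assoc] at hz1
    rw [Preadditive.comp_add, ← hz1]
    abel

/-- An object admitting an `S`-equivalence from `P`. -/
lemma star_of_eqMod {P S : Set C} (hS : lOrth C (rOrth C S) = S) {E K : C} (f : E ⟶ K)
    (hE : E ∈ P) (hf : EqMod S f) : K ∈ starSet C P S := by
  obtain ⟨Z, g, h, hT⟩ := distinguished_cocone_triangle f
  exact ⟨E, Z, f, g, h, hT, hE, cone_of_eqMod hS hT hf⟩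

/-- Gluing: `X ⋆ (P ⋆ S) ⊆ (X ⋆ P) ⋆ S`. -/
lemma glue {S P : Set C} {X Y Z E : C} {f : X ⟶ Y} {g : Y ⟶ Z}
    {h : Z ⟶ X⟦(1 : ℤ)⟧} (hT : Triangle.mk f g h ∈ (distTriang C))
    (e : E ⟶ Z) (he : EqMod S e) (hE : E ∈ P) :
    ∃ (F : C) (k : F ⟶ Y), F ∈ starSet C {X} P ∧ EqMod S k := by
  obtain ⟨F, f1, g1, hT1⟩ := distinguished_cocone_triangle₂ (e ≫ h)
  obtain ⟨b, hb1, hb2⟩ := tri_mor2 hT1 hT (𝟙 X) e (by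
    rw [CategoryTheory.Functor.map_id, Category.comp_id])
  exact ⟨F, b, ⟨X, E, f1, g1, _, hT1, rfl, hE⟩, eqMod_mid hT1 hT hb1 hb2 (by
    rw [CategoryTheory.Functor.map_id, Category.comp_id]) (eqMod_id X) he⟩

lemma eqMod_biprod_fst {S : Set C} {X Y : C} (hY : Y⟦(1 : ℤ)⟧ ∈ S) :
    EqMod S (biprod.fst : X ⊞ Y ⟶ X) := by
  have h0 := tri_rot (tri_biprod_std Y X)
  have h1 : Triangle.mk (biprod.snd : Y ⊞ X ⟶ X) (0 : X ⟶ Y⟦(1 : ℤ)⟧)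
    (-(biprod.inl : Y ⟶ Y ⊞ X)⟦(1 : ℤ)⟧') ∈ (distTriang C) := h0
  have h2 := tri_congr h1 (biprod.braiding Y X) (Iso.refl X) (Iso.refl _)
  have := eqMod_of_cone h2 hY
  convert this using 1
  ext <;> simp

/-! ### closure properties of `smd (extClosure U)` -/

/-- `smd (coprod U)`. -/
def SE (U : Set C) : Set C := smd C {X | extClosure C U X}

lemma SE_star {U : Set C} : starSet C (SE U) (SE U) ⊆ SE U := by
  refine subset_trans star_smd (smd_mono ?_)
  rintro Y ⟨X, Z, f, g, h, hT, hX, hZ⟩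
  exact extClosure.ext f g h hT hX hZ

lemma SE_zero {U : Set C} {X : C} (hX : IsZero X) : X ∈ SE U := smd_self (extClosure.zero hX)

lemma SE_of {U : Set C} {X : C} (hX : X ∈ U) : X ∈ SE U := smd_self (extClosure.of hX)

lemma SE_retract {U : Set C} {X Y : C} (hY : Y ∈ SE U) (i : X ⟶ Y) (r : Y ⟶ X)
    (w : i ≫ r = 𝟙 X) : X ∈ SE U := smd_retract hY i r w

lemma SE_iso {U : Set C} {X Y : C} (e : Y ≅ X) (hY : Y ∈ SE U) : X ∈ SE U := smd_iso e hY

lemma SE_biprod {U : Set C} {X Y : C} (hX : X ∈ SE U) (hY : Y ∈ SE U) : (X ⊞ Y) ∈ SE U :=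
  SE_star ⟨X, Y, _, _, _, tri_biprod_std X Y, hX, hY⟩

/-- Induction principle for `SE`. -/
lemma SE_ind {U : Set C} {P : Set C} (hof : U ⊆ P) (hz : ∀ X, IsZero X → X ∈ P)
    (hst : starSet C P P ⊆ P) (hr : smd C P ⊆ P) : SE U ⊆ P := by
  rintro X ⟨Y, hY, i, r, w⟩
  refine hr ⟨Y, ?_, i, r, w⟩
  change extClosure C U Y at hY
  clear i r w
  induction hY with
  | of h => exact hof h
  | zero h => exact hz _ h
  | ext f g h hT _ _ h1 h2 => exact hst ⟨_, _, f, g, h, hT, h1, h2⟩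

lemma SE_le {U V : Set C} (h : U ⊆ SE V) : SE U ⊆ SE V :=
  SE_ind h (fun _ => SE_zero) SE_star smd_smd

lemma SE_mono {U V : Set C} (h : U ⊆ V) : SE U ⊆ SE V :=
  SE_le (fun _ hX => SE_of (h hX))

lemma tri_shift {X Y Z : C} {f : X ⟶ Y} {g : Y ⟶ Z} {h : Z ⟶ X⟦(1 : ℤ)⟧}
    (hT : Triangle.mk f g h ∈ (distTriang C)) (n : ℤ) :
    ∃ (f' : X⟦n⟧ ⟶ Y⟦n⟧) (g' : Y⟦n⟧ ⟶ Z⟦n⟧) (h' : Z⟦n⟧ ⟶ X⟦n⟧⟦(1 : ℤ)⟧),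
      Triangle.mk f' g' h' ∈ (distTriang C) :=
  ⟨_, _, _, Triangle.shift_distinguished _ hT n⟩

lemma SE_shift {U V : Set C} (n : ℤ) (h : ∀ X ∈ U, X⟦n⟧ ∈ SE V) :
    ∀ X ∈ SE U, X⟦n⟧ ∈ SE V := by
  intro X hX
  refine SE_ind (P := {X | X⟦n⟧ ∈ SE V}) h ?_ ?_ ?_ hX
  · intro X hX
    exact SE_zero ((shiftFunctor C n).map_isZero hX)
  · rintro Y ⟨X, Z, f, g, h, hT, hX, hZ⟩
    obtain ⟨f', g', h', hT'⟩ := tri_shift hT n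
    exact SE_star ⟨_, _, f', g', h', hT', hX, hZ⟩
  · rintro X ⟨Y, hY, i, r, w⟩
    exact SE_retract hY (i⟦n⟧') (r⟦n⟧') (by rw [← Functor.map_comp, w, CategoryTheory.Functor.map_id])

end Aux2

section Aux3
variable {C}

/-- Common setting for the quasiapproximable and the approximable case. -/
structure Ctx (G Rm : ℤ → Set C) (A : ℤ) (T : Set C) : Prop where
  gs : IsGenSeq C G
  pre : IsGPreApprox C G Rm A
  hv : ∀ n i : ℤ, A ≤ n + i → homZero C (G n) (Rm i)
  cpt : compacts C ⊆ T
  approx : ∀ i : ℤ, ∀ F ∈ Rm i ∩ T,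
    approxTriangle C F (gBarInt C G (-A - i) (A - i)) (Rm (i + 1) ∩ T)

variable {G Rm : ℤ → Set C} {A : ℤ} {T : Set C}

lemma Ctx.met (c : Ctx G Rm A T) : IsExtGoodMetric C Rm := c.pre.orthMetric.toIsExtGoodMetric

lemma Ctx.orth (c : Ctx G Rm A T) (n : ℤ) : lOrth C (rOrth C (Rm n)) = Rm n :=
  c.pre.orthMetric.orth n

lemma R_anti_nat (hR : IsExtGoodMetric C Rm) (i : ℤ) (n : ℕ) : Rm (i + n) ⊆ Rm i := by
  induction n with
  | zero => simp
  | succ n ih =>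
    refine subset_trans ?_ ih
    have := hR.antitone (i + n)
    push_cast
    rwa [← add_assoc]

lemma R_anti (hR : IsExtGoodMetric C Rm) {i j : ℤ} (h : i ≤ j) : Rm j ⊆ Rm i := by
  have := R_anti_nat hR i (j - i).toNat
  rwa [Int.toNat_of_nonneg (by omega), add_sub_cancel] at this

lemma R_shift1 (hR : IsExtGoodMetric C Rm) {i j : ℤ} (h : i + 1 ≤ j) {X : C} (hX : X ∈ Rm j) :
    X⟦(1 : ℤ)⟧ ∈ Rm i :=
  hR.shift_one i ⟨X, R_anti hR h hX, ⟨Iso.refl _⟩⟩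

lemma R_shiftm1 (hR : IsExtGoodMetric C Rm) {i j : ℤ} (h : i + 1 ≤ j) {X : C} (hX : X ∈ Rm j) :
    X⟦(-1 : ℤ)⟧ ∈ Rm i :=
  hR.shift_neg_one i ⟨X, R_anti hR h hX, ⟨Iso.refl _⟩⟩

lemma R_shift_nat (hR : IsExtGoodMetric C Rm) {i : ℤ} {X : C} (hX : X ∈ Rm i) (n : ℕ) :
    X⟦(n : ℤ)⟧ ∈ Rm (i - n) ∧ X⟦(-n : ℤ)⟧ ∈ Rm (i - n) := by
  induction n with
  | zero =>
    have e : X⟦((0 : ℕ) : ℤ)⟧ ≅ X := (shiftFunctorZero' C ((0 : ℕ) : ℤ) (by simp)).app X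
    have e' : X⟦(-((0 : ℕ) : ℤ))⟧ ≅ X := (shiftFunctorZero' C (-((0 : ℕ) : ℤ)) (by simp)).app X
    have h0 : i - ((0 : ℕ) : ℤ) = i := by simp
    rw [h0]
    exact ⟨hR.iso_closed i e.symm hX, hR.iso_closed i e'.symm hX⟩
  | succ n ih =>
    constructor
    · exact hR.iso_closed _ ((shiftFunctorAdd' C (n : ℤ) 1 ((n + 1 : ℕ) : ℤ) (by push_cast; ring)).app X).symm
        (R_shift1 hR (by push_cast; omega) ih.1)
    · exact hR.iso_closed _ ((shiftFunctorAdd' C (-n : ℤ) (-1) (-((n + 1 : ℕ) : ℤ)) (by push_cast; ring)).app X).symm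
        (R_shiftm1 hR (by push_cast; omega) ih.2)

lemma R_shift (hR : IsExtGoodMetric C Rm) {i j : ℤ} {X : C} (hX : X ∈ Rm i) (s : ℤ)
    (h : j + |s| ≤ i) : X⟦s⟧ ∈ Rm j := by
  obtain ⟨n, rfl | rfl⟩ := Int.eq_nat_or_neg s
  · exact R_anti hR (by simp at h; omega) (R_shift_nat hR hX n).1
  · exact R_anti hR (by simp at h; omega) (R_shift_nat hR hX n).2

lemma unionIcc_mono {a b a' b' : ℤ} (ha : a' ≤ a) (hb : b ≤ b') :
    unionIcc C G a b ⊆ unionIcc C G a' b' :=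
  Set.biUnion_subset_biUnion_left (Set.Icc_subset_Icc ha hb)

lemma gInt_mono {a b a' b' : ℤ} (ha : a' ≤ a) (hb : b ≤ b') :
    gInt C G a b ⊆ gInt C G a' b' := SE_mono (unionIcc_mono ha hb)

lemma gIic_mono {b b' : ℤ} (hb : b ≤ b') : gIic C G b ⊆ gIic C G b' :=
  SE_mono (Set.biUnion_subset_biUnion_left (Set.Iic_subset_Iic.2 hb))

lemma gInt_le_gIic {a b b' : ℤ} (hb : b ≤ b') : gInt C G a b ⊆ gIic C G b' :=
  SE_mono (Set.biUnion_subset_biUnion_left (fun _ hx => le_trans hx.2 hb))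

lemma gInt_shift (hG : IsGenSeq C G) {a b : ℤ} {X : C} (hX : X ∈ gInt C G a b) :
    X⟦(1 : ℤ)⟧ ∈ gInt C G (a - 1) (b + 1) ∧ X⟦(-1 : ℤ)⟧ ∈ gInt C G (a - 1) (b + 1) := by
  constructor
  · refine SE_shift (U := unionIcc C G a b) 1 ?_ X hX
    intro X hX
    simp only [unionIcc, Set.mem_iUnion, Set.mem_Icc] at hX
    obtain ⟨m, hm, hX⟩ := hX
    exact gInt_mono (by omega) (by omega) (hG.shift_cond m (Or.inr ⟨X, hX, ⟨Iso.refl _⟩⟩))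
  · refine SE_shift (U := unionIcc C G a b) (-1) ?_ X hX
    intro X hX
    simp only [unionIcc, Set.mem_iUnion, Set.mem_Icc] at hX
    obtain ⟨m, hm, hX⟩ := hX
    exact gInt_mono (by omega) (by omega) (hG.shift_cond m (Or.inl (Or.inl ⟨X, hX, ⟨Iso.refl _⟩⟩)))

lemma compacts_eq (hG : IsGenSeq C G) : SE (unionAll C G) = compacts C := hG.generates

lemma gInt_le_compacts (hG : IsGenSeq C G) {a b : ℤ} : gInt C G a b ⊆ compacts C := by
  rw [← compacts_eq hG]
  exact SE_mono (Set.iUnion₂_subset (fun m _ => Set.subset_iUnion G m))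

lemma gIic_le_compacts (hG : IsGenSeq C G) {b : ℤ} : gIic C G b ⊆ compacts C := by
  rw [← compacts_eq hG]
  exact SE_mono (Set.iUnion₂_subset (fun m _ => Set.subset_iUnion G m))

lemma compacts_star (hG : IsGenSeq C G) : starSet C (compacts C) (compacts C) ⊆ compacts C := by
  rw [← compacts_eq hG]
  exact SE_star

lemma compacts_zero (hG : IsGenSeq C G) {X : C} (hX : IsZero X) : X ∈ compacts C := by
  rw [← compacts_eq hG]
  exact SE_zero hX

lemma compacts_retract (hG : IsGenSeq C G) {X Y : C} (hY : Y ∈ compacts C) (i : X ⟶ Y) (r : Y ⟶ X)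
    (w : i ≫ r = 𝟙 X) : X ∈ compacts C := by
  rw [← compacts_eq hG] at *
  exact SE_retract hY i r w

lemma compacts_iso (hG : IsGenSeq C G) {X Y : C} (e : Y ≅ X) (hY : Y ∈ compacts C) :
    X ∈ compacts C := compacts_retract hG hY e.inv e.hom e.inv_hom_id

lemma compacts_shift1 (hG : IsGenSeq C G) {X : C} (hX : X ∈ compacts C) :
    X⟦(1 : ℤ)⟧ ∈ compacts C ∧ X⟦(-1 : ℤ)⟧ ∈ compacts C := by
  rw [← compacts_eq hG] at *
  constructor
  · refine SE_shift 1 ?_ X hX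
    intro X hX
    rw [compacts_eq hG]
    obtain ⟨m, hX⟩ := Set.mem_iUnion.1 hX
    exact gInt_le_compacts hG (hG.shift_cond m (Or.inr ⟨X, hX, ⟨Iso.refl _⟩⟩))
  · refine SE_shift (-1) ?_ X hX
    intro X hX
    rw [compacts_eq hG]
    obtain ⟨m, hX⟩ := Set.mem_iUnion.1 hX
    exact gInt_le_compacts hG (hG.shift_cond m (Or.inl (Or.inl ⟨X, hX, ⟨Iso.refl _⟩⟩)))

lemma compacts_shift_nat (hG : IsGenSeq C G) {X : C} (hX : X ∈ compacts C) (n : ℕ) :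
    X⟦(n : ℤ)⟧ ∈ compacts C ∧ X⟦(-n : ℤ)⟧ ∈ compacts C := by
  induction n with
  | zero =>
    have e : X⟦((0 : ℕ) : ℤ)⟧ ≅ X := (shiftFunctorZero' C ((0 : ℕ) : ℤ) (by simp)).app X
    have e' : X⟦(-((0 : ℕ) : ℤ))⟧ ≅ X := (shiftFunctorZero' C (-((0 : ℕ) : ℤ)) (by simp)).app X
    exact ⟨compacts_iso hG e.symm hX, compacts_iso hG e'.symm hX⟩
  | succ n ih =>
    constructor
    · exact compacts_iso hG ((shiftFunctorAdd' C (n : ℤ) 1 ((n + 1 : ℕ) : ℤ) (by push_cast; ring)).app X).symm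
        (compacts_shift1 hG ih.1).1
    · exact compacts_iso hG ((shiftFunctorAdd' C (-n : ℤ) (-1) (-((n + 1 : ℕ) : ℤ)) (by push_cast; ring)).app X).symm
        (compacts_shift1 hG ih.2).2

lemma compacts_shift (hG : IsGenSeq C G) {X : C} (hX : X ∈ compacts C) (s : ℤ) :
    X⟦s⟧ ∈ compacts C := by
  obtain ⟨n, rfl | rfl⟩ := Int.eq_nat_or_neg s
  · exact (compacts_shift_nat hG hX n).1
  · exact (compacts_shift_nat hG hX n).2

lemma gInt_hom (hv : ∀ n i : ℤ, A ≤ n + i → homZero C (G n) (Rm i)) {a b n : ℤ} (h : A ≤ a + n)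
    {E D : C} (hE : E ∈ gInt C G a b) (hD : D ∈ Rm n) (f : E ⟶ D) : f = 0 := by
  refine SE_ind (U := unionIcc C G a b) (P := {E | ∀ f : E ⟶ D, f = 0}) ?_ ?_ ?_ ?_ hE f
  · intro X hX f
    simp only [unionIcc, Set.mem_iUnion, Set.mem_Icc] at hX
    obtain ⟨m, hm, hX⟩ := hX
    exact hv m n (by omega) X hX D hD f
  · intro X hX f
    exact hX.eq_of_src _ _
  · rintro Y ⟨X, Z, f, g, h, hT, hX, hZ⟩ k
    obtain ⟨l, rfl⟩ := tri_yon2 hT k (hX _)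
    rw [hZ l, comp_zero]
  · rintro X ⟨Y, hY, i, r, w⟩ f
    rw [← Category.id_comp f, ← w, Category.assoc, hY (r ≫ f), comp_zero]

lemma Ctx.compact_hom (c : Ctx G Rm A T) {K : C} (hK : K ∈ compacts C) :
    ∃ N : ℤ, ∀ j, N ≤ j → ∀ D ∈ Rm j, ∀ f : K ⟶ D, f = 0 := by
  rw [← compacts_eq c.gs] at hK
  refine SE_ind (P := {K | ∃ N : ℤ, ∀ j, N ≤ j → ∀ D ∈ Rm j, ∀ f : K ⟶ D, f = 0}) ?_ ?_ ?_ ?_ hK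
  · intro X hX
    obtain ⟨m, hX⟩ := Set.mem_iUnion.1 hX
    obtain ⟨N, hN⟩ := c.pre.cond2 m
    exact ⟨N, fun j hj D hD f => hN j hj X hX D hD f⟩
  · intro X hX
    exact ⟨0, fun _ _ _ _ f => hX.eq_of_src _ _⟩
  · rintro Y ⟨X, Z, f, g, h, hT, ⟨N, hX⟩, ⟨N', hZ⟩⟩
    refine ⟨max N N', fun j hj D hD k => ?_⟩
    obtain ⟨l, rfl⟩ := tri_yon2 hT k (hX j (le_trans (le_max_left _ _) hj) D hD _)
    rw [hZ j (le_trans (le_max_right _ _) hj) D hD l, comp_zero]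
  · rintro X ⟨Y, ⟨N, hY⟩, i, r, w⟩
    refine ⟨N, fun j hj D hD f => ?_⟩
    rw [← Category.id_comp f, ← w, Category.assoc, hY j hj D hD (r ≫ f), comp_zero]

lemma Ctx.gIic_le_R (c : Ctx G Rm A T) {b n : ℤ} (h : n + A ≤ -b) : gIic C G b ⊆ Rm n := by
  have h1 := c.pre.cond1 (-b - A)
  have e : MG C G (-b - A + A) = gIic C G b := by
    unfold MG; congr 1; ring
  rw [e] at h1
  exact fun X hX => R_anti c.met (by omega) (h1 hX).1

end Aux3

section Aux4
variable {C}

/-- Objects `Y` such that every map from a compact to `Y` factors through an object of `S`. -/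
def Fac (S : Set C) : Set C :=
  {Y | ∀ K ∈ compacts C, ∀ g : K ⟶ Y, ∃ P ∈ S, ∃ (u : K ⟶ P) (v : P ⟶ Y), u ≫ v = g}

/-- Closed under binary biproducts. -/
def BiClosed (S : Set C) : Prop := ∀ X ∈ S, ∀ Y ∈ S, (X ⊞ Y) ∈ S

lemma Fac_mono {S S' : Set C} (h : S ⊆ S') : Fac S ⊆ Fac S' := by
  intro Y hY K hK g
  obtain ⟨P, hP, u, v, w⟩ := hY K hK g
  exact ⟨P, h hP, u, v, w⟩

lemma Fac_self {S : Set C} : S ⊆ Fac S := fun Y hY _ _ g => ⟨Y, hY, g, 𝟙 Y, by simp⟩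

lemma Fac_smd {S : Set C} : smd C (Fac S) ⊆ Fac S := by
  rintro X ⟨Y, hY, i, r, w⟩ K hK g
  obtain ⟨P, hP, u, v, h⟩ := hY K hK (g ≫ i)
  exact ⟨P, hP, u, v ≫ r, by rw [← Category.assoc, h, Category.assoc, w, Category.comp_id]⟩

lemma Fac_iso {S : Set C} {X Y : C} (e : X ≅ Y) (h : X ∈ Fac S) : Y ∈ Fac S :=
  Fac_smd ⟨X, h, e.inv, e.hom, e.inv_hom_id⟩

lemma fac_add {S : Set C} (hS : BiClosed S) {K Y : C} {g g' : K ⟶ Y}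
    (h : ∃ P ∈ S, ∃ (u : K ⟶ P) (v : P ⟶ Y), u ≫ v = g)
    (h' : ∃ P ∈ S, ∃ (u : K ⟶ P) (v : P ⟶ Y), u ≫ v = g') :
    ∃ P ∈ S, ∃ (u : K ⟶ P) (v : P ⟶ Y), u ≫ v = g + g' := by
  obtain ⟨P, hP, u, v, rfl⟩ := h
  obtain ⟨P', hP', u', v', rfl⟩ := h'
  exact ⟨P ⊞ P', hS _ hP _ hP', biprod.lift u u', biprod.desc v v', by simp⟩

lemma Fac_coprod {S : Set C} (hS : BiClosed S) (hz : ∃ O ∈ S, IsZero O) {α : Type v} (f : α → C)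
    (hf : ∀ i, f i ∈ Fac S) : (∐ f) ∈ Fac S := by
  classical
  intro K hK g
  obtain ⟨s, h, rfl⟩ := hK α f g
  have hid : (𝟙 (∐ (fun i : {a : α // a ∈ s} => f i.1))) =
      ∑ i : {a : α // a ∈ s}, Sigma.π (fun i : {a : α // a ∈ s} => f i.1) i ≫
        Sigma.ι (fun i : {a : α // a ∈ s} => f i.1) i := by
    refine Sigma.hom_ext _ _ (fun j => ?_)
    rw [Category.comp_id, Preadditive.comp_sum, Finset.sum_eq_single j]
    · rw [Sigma.ι_π_eq_id_assoc]
    · intro i _ hij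
      rw [Sigma.ι_π_of_ne_assoc _ hij.symm, zero_comp]
    · intro h
      exact absurd (Finset.mem_univ j) h
  rw [← Category.id_comp (Sigma.desc _), hid, Preadditive.sum_comp, Preadditive.comp_sum]
  refine Finset.sum_induction _
    (fun g => ∃ P ∈ S, ∃ (u : K ⟶ P) (v : P ⟶ ∐ f), u ≫ v = g) ?_ ?_ ?_
  · intro a b ha hb
    exact fac_add hS ha hb
  · obtain ⟨O, hO, _⟩ := hz
    exact ⟨O, hO, 0, 0, by simp⟩
  · intro i _
    obtain ⟨P, hP, u, v, hw⟩ := hf i.1 K hK (h ≫ Sigma.π (fun i : {a : α // a ∈ s} => f i.1) i)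
    refine ⟨P, hP, u, v ≫ Sigma.ι f i.1, ?_⟩
    rw [← Category.assoc, hw]
    simp

lemma biClosed_star {S S' : Set C} (h : BiClosed S) (h' : BiClosed S') :
    BiClosed (starSet C S S') := by
  rintro Y ⟨X, Z, f, g, k, hT, hX, hZ⟩ Y' ⟨X', Z', f', g', k', hT', hX', hZ'⟩
  obtain ⟨f₀, g₀, h₀, hT₀⟩ := tri_biprod hT hT'
  exact ⟨_, _, _, _, _, hT₀, h _ hX _ hX', h' _ hZ _ hZ'⟩

lemma biprod_zero_iso {X O : C} (hO : IsZero O) : Nonempty (X ⊞ O ≅ X) :=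
  ⟨{ hom := biprod.fst
     inv := biprod.inl
     hom_inv_id := by
      ext
      · simp
      · simp
      · exact hO.eq_of_src _ _
      · exact hO.eq_of_src _ _
     inv_hom_id := by simp }⟩

lemma zero_biprod_iso {X O : C} (hO : IsZero O) : Nonempty (O ⊞ X ≅ X) :=
  ⟨biprod.braiding O X ≪≫ (biprod_zero_iso hO).some⟩

/-- The sum of an extension with an object on the left. -/
lemma star_biprod_left {S S' : Set C} {Y X' : C} {X Z : C} {f : X ⟶ Y} {g : Y ⟶ Z}
    {h : Z ⟶ X⟦(1 : ℤ)⟧} (hT : Triangle.mk f g h ∈ (distTriang C)) (hX : (X ⊞ X') ∈ S)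
    (hZ : Z ∈ S') : (Y ⊞ X') ∈ starSet C S S' := by
  obtain ⟨f₀, g₀, h₀, hT₀⟩ := tri_biprod hT (tri_zero_right (Y := X') (isZero_zero C))
  obtain ⟨e⟩ := biprod_zero_iso (X := Z) (isZero_zero C)
  exact ⟨_, _, _, _, _, tri_congr hT₀ (Iso.refl _) (Iso.refl _) e, hX, hZ⟩

lemma Fac_star {G : ℤ → Set C} (hG : IsGenSeq C G) {S S' : Set C} (hS : BiClosed S)
    (hS' : S' ⊆ compacts C) : starSet C (Fac S) (Fac S') ⊆ Fac (starSet C S S') := by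
  rintro Y ⟨X, Z, f, g, h, hT, hX, hZ⟩ K hK k
  obtain ⟨Z', hZ', u, v, huv⟩ := hZ K hK (k ≫ g)
  obtain ⟨C', p, q, hT1⟩ := distinguished_cocone_triangle₁ u
  have hC' : C' ∈ compacts C := by
    have h1 := compacts_shift hG (hS' hZ') (-1)
    exact compacts_star hG ⟨_, _, _, _, _, inv_rot_of_distTriang _ hT1, h1, hK⟩
  obtain ⟨a, ha1, ha2⟩ := tri_mor1 hT1 hT k v huv
  obtain ⟨X', hX', a1, a2, haa⟩ := hX C' hC' a
  obtain ⟨Y', f1, g1, hT2⟩ := distinguished_cocone_triangle₂ (q ≫ a1⟦(1 : ℤ)⟧')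
  obtain ⟨b, hb1, hb2⟩ := tri_mor2 hT2 hT a2 v (by
    rw [Category.assoc, ← Functor.map_comp, haa, ha2])
  obtain ⟨l, hl⟩ := tri_coy3 hT2 u (by rw [← Category.assoc, tri_23 hT1, zero_comp])
  obtain ⟨m, hm⟩ := tri_coy2 hT (k - l ≫ b) (by
    rw [Preadditive.sub_comp, Category.assoc, ← hb2, ← Category.assoc, ← hl, huv, sub_self])
  obtain ⟨X'', hX'', m1, m2, hmm⟩ := hX K hK m
  refine ⟨Y' ⊞ X'', star_biprod_left hT2 (hS _ hX' _ hX'') hZ', biprod.lift l m1,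
    biprod.desc b (m2 ≫ f), ?_⟩
  rw [biprod.lift_desc, reassoc_of% hmm, ← hm]
  abel

lemma SE_biClosed {U : Set C} : BiClosed (SE U) := fun _ hX _ hY => SE_biprod hX hY

lemma bigClosure_le_Fac {G : ℤ → Set C} (hG : IsGenSeq C G) {U : Set C} (hU : SE U ⊆ compacts C)
    {X : C} (hX : bigClosure C U X) : X ∈ Fac (SE U) := by
  induction hX with
  | of h => exact Fac_self (SE_of h)
  | zero h => exact Fac_self (SE_zero h)
  | coprod f _ e ih =>
    exact Fac_iso e.symm (Fac_coprod SE_biClosed ⟨_, SE_zero (isZero_zero C), isZero_zero C⟩ f ih)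
  | ext f g h hT _ _ h1 h2 =>
    exact Fac_mono SE_star (Fac_star hG SE_biClosed hU ⟨_, _, f, g, h, hT, h1, h2⟩)
  | retract i r w _ ih => exact Fac_smd ⟨_, ih, i, r, w⟩

end Aux4

section Aux5
variable {C}
variable {G Rm : ℤ → Set C} {A : ℤ} {T : Set C}

/-- Gluing for classes. -/
lemma star_glue {P Q S : Set C} (hS : lOrth C (rOrth C S) = S) :
    starSet C P (starSet C Q S) ⊆ starSet C (starSet C P Q) S := by
  rintro Y ⟨X, Z, f, g, h, hT, hX, ⟨E, D, e, d, k, hT', hE, hD⟩⟩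
  obtain ⟨F, b, hF, hb⟩ := glue hT e (eqMod_of_cone hT' hD) hE
  exact star_of_eqMod hS b (star_mono (Set.singleton_subset_iff.2 hX) subset_rfl hF) hb

lemma star_zero_left {P S : Set C} {X : C} (hX : X ∈ S) (hP : ∃ O ∈ P, IsZero O) :
    X ∈ starSet C P S := by
  obtain ⟨O, hO, hz⟩ := hP
  exact ⟨O, X, _, _, _, tri_zero_left hz, hO, hX⟩

lemma tower (hG : IsGenSeq C G) (hR : IsOrthMetric C Rm) {Q : ℤ → Set C} {D : ℕ → ℤ → Set C}
    (happ : ∀ j : ℤ, ∀ F ∈ Rm j ∩ T, approxTriangle C F (Fac (Q j)) (Rm (j + 1) ∩ T))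
    (hQ : ∀ j, BiClosed (Q j)) (hD : ∀ m j, D m j ⊆ compacts C)
    (hz : ∀ j (O : C), IsZero O → O ∈ D 0 j)
    (hs : ∀ m j, starSet C (Q j) (D m (j + 1)) ⊆ D (m + 1) j) (m : ℕ) :
    ∀ (j : ℤ), ∀ F ∈ Rm j ∩ T, ∃ (E : C) (f : E ⟶ F), E ∈ Fac (D m j) ∧ EqMod (Rm (j + m)) f := by
  induction m with
  | zero =>
    intro j F hF
    refine ⟨_, _, Fac_self (hz j _ (isZero_zero C)),
      eqMod_of_cone (tri_zero_left (isZero_zero C)) ?_⟩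
    simpa using hF.1
  | succ m ih =>
    intro j F hF
    obtain ⟨E1, D1, f, g, h, hT, hE1, hD1⟩ := happ j F hF
    obtain ⟨E, e, hE, he⟩ := ih (j + 1) D1 hD1
    obtain ⟨E', k, hE', hk⟩ := glue hT e he hE
    refine ⟨E', k, ?_, ?_⟩
    · exact Fac_mono (hs m j) (Fac_star hG (hQ j) (hD m (j + 1))
        (star_mono (Set.singleton_subset_iff.2 hE1) subset_rfl hE'))
    · have e : j + 1 + (m : ℤ) = j + ((m + 1 : ℕ) : ℤ) := by push_cast; ring
      rwa [e] at hk

lemma tower_retract (hG : IsGenSeq C G) (hR : IsOrthMetric C Rm) {Q : ℤ → Set C}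
    {D : ℕ → ℤ → Set C} (hc : compacts C ⊆ T)
    (happ : ∀ j : ℤ, ∀ F ∈ Rm j ∩ T, approxTriangle C F (Fac (Q j)) (Rm (j + 1) ∩ T))
    (hQ : ∀ j, BiClosed (Q j)) (hD : ∀ m j, D m j ⊆ compacts C)
    (hz : ∀ j (O : C), IsZero O → O ∈ D 0 j)
    (hs : ∀ m j, starSet C (Q j) (D m (j + 1)) ⊆ D (m + 1) j) (m : ℕ) (j : ℤ) {K : C}
    (hK : K ∈ compacts C) (hKR : K ∈ Rm j) (hv : ∀ D ∈ Rm (j + m), ∀ f : K ⟶ D, f = 0) :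
    K ∈ smd C (D m j) := by
  obtain ⟨E, f, hE, hf⟩ := tower hG hR happ hQ hD hz hs m j K ⟨hKR, hc hK⟩
  obtain ⟨Z, g, h, hT⟩ := distinguished_cocone_triangle f
  have hZ := cone_of_eqMod (hR.orth _) hT hf
  obtain ⟨l, hl⟩ := tri_coy2 hT (𝟙 K) (hv Z hZ _)
  obtain ⟨P, hP, u, v, w⟩ := hE K hK l
  exact ⟨P, hP, u, v ≫ f, by rw [← Category.assoc, w, hl]⟩

/-- The class used in the first tower. -/
def DD (G Rm : ℤ → Set C) (A j : ℤ) : Set C :=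
  {V | V ∈ gIic C G (A - j) ∧ ∀ n : ℤ, V ∈ starSet C (gInt C G (-3 * A - n) (A - j)) (Rm n)}

lemma gInt_zero {a b : ℤ} : ∃ O ∈ gInt C G a b, IsZero O :=
  ⟨_, SE_zero (isZero_zero C), isZero_zero C⟩

lemma Ctx.DD_zero (c : Ctx G Rm A T) (j : ℤ) {O : C} (hO : IsZero O) : O ∈ DD G Rm A j :=
  ⟨SE_zero hO, fun n => star_zero_left (c.met.zero_mem n O hO) gInt_zero⟩

lemma Ctx.DD_star (c : Ctx G Rm A T) (j : ℤ) :
    starSet C (gInt C G (-A - j) (A - j)) (DD G Rm A (j + 1)) ⊆ DD G Rm A j := by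
  rintro V ⟨X, Z, f, g, h, hT, hX, hZ⟩
  have hV : V ∈ gIic C G (A - j) :=
    SE_star ⟨X, Z, f, g, h, hT, gInt_le_gIic le_rfl hX, gIic_mono (by omega) hZ.1⟩
  refine ⟨hV, fun n => ?_⟩
  by_cases hn : j - 2 * A ≤ n
  · have h1 := star_glue (c.orth n) ⟨X, Z, f, g, h, hT, hX, hZ.2 n⟩
    refine star_mono ?_ subset_rfl h1
    refine subset_trans ?_ SE_star
    exact star_mono (gInt_mono (by omega) le_rfl) (gInt_mono le_rfl (by omega))
  · exact star_zero_left (c.gIic_le_R (by omega) hV) gInt_zero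

/-- Every compact in `R_i` is a retract of an object of `DD`. -/
lemma Ctx.retract_DD (c : Ctx G Rm A T) {i : ℤ} {K : C} (hK : K ∈ compacts C) (hKR : K ∈ Rm i) :
    K ∈ smd C (DD G Rm A i) := by
  obtain ⟨N, hN⟩ := c.compact_hom hK
  refine tower_retract c.gs c.pre.orthMetric c.cpt (Q := fun j => gInt C G (-A - j) (A - j))
    (D := fun _ j => DD G Rm A j) ?_ (fun j => SE_biClosed) ?_ (fun j O hO => c.DD_zero j hO)
    (fun _ j => c.DD_star j) (N - i).toNat i hK hKR ?_
  · intro j F hF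
    obtain ⟨E, D, f, g, h, hT, hE, hD⟩ := c.approx j F hF
    exact ⟨E, D, f, g, h, hT, bigClosure_le_Fac c.gs (gInt_le_compacts c.gs) hE, hD⟩
  · intro _ j X hX
    exact gIic_le_compacts c.gs hX.1
  · intro D hD f
    exact hN _ (by omega) D hD f

end Aux5

section Aux6
variable {C}
variable {G Rm : ℤ → Set C} {A : ℤ} {T : Set C}

/-- Objects with uniformly good approximations by `G^{[-c-n,b]}` modulo `R_n`. -/
def Gd (G Rm : ℤ → Set C) (c b : ℤ) : Set C :=
  {V | ∀ n : ℤ, V ∈ starSet C (gInt C G (-c - n) b) (Rm n)}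

lemma Gd_iso {c b : ℤ} {V V' : C} (e : V ≅ V') (h : V ∈ Gd G Rm c b) : V' ∈ Gd G Rm c b :=
  fun n => star_iso e (h n)

lemma Gd_mono {c b c' b' : ℤ} (hc : c ≤ c') (hb : b ≤ b') : Gd G Rm c b ⊆ Gd G Rm c' b' :=
  fun _ h n => star_mono (gInt_mono (by omega) hb) subset_rfl (h n)

lemma eqMod_neg {S : Set C} {X Y : C} {f : X ⟶ Y} (hf : EqMod S f) : EqMod S (-f) := by
  intro W hW
  refine ⟨fun k hk => (hf W hW).1 k ?_, fun e => ?_⟩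
  · rwa [Preadditive.neg_comp, neg_eq_zero] at hk
  · obtain ⟨k, rfl⟩ := (hf W hW).2 e
    exact ⟨-k, by rw [Functor.map_neg, Preadditive.neg_comp, Preadditive.comp_neg, neg_neg]⟩

lemma eqMod_shift {S : Set C} {X Y Z : C} {f : X ⟶ Y} {g : Y ⟶ Z} {h : Z ⟶ X⟦(1 : ℤ)⟧}
    (hT : Triangle.mk f g h ∈ (distTriang C)) (hZ : Z⟦(1 : ℤ)⟧ ∈ S) : EqMod S (f⟦(1 : ℤ)⟧') := by
  have := eqMod_neg (eqMod_of_cone (tri_rot (tri_rot (tri_rot hT))) hZ)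
  rwa [neg_neg] at this

lemma Ctx.Gd_cone (c : Ctx G Rm A T) {k b : ℤ} (hk : 0 ≤ k) {V1 V2 V3 : C} {f : V1 ⟶ V2}
    {g : V2 ⟶ V3} {h : V3 ⟶ V1⟦(1 : ℤ)⟧} (hT : Triangle.mk f g h ∈ (distTriang C))
    (h1 : V1 ∈ Gd G Rm k b) (h2 : V2 ∈ Gd G Rm k b) : V3 ∈ Gd G Rm (2 * k + A + 2) (b + 1) := by
  have hA := c.pre.A_pos
  intro n
  obtain ⟨E1, D1, e1, d1, δ1, hT1, hE1, hD1⟩ := h1 (n + 1)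
  obtain ⟨E2, D2, e2, d2, δ2, hT2, hE2, hD2⟩ := h2 (n + 1 + k + A)
  obtain ⟨φ, hφ⟩ := tri_coy2 hT2 (e1 ≫ f)
    (gInt_hom c.hv (n := n + 1 + k + A) (by omega) hE1 hD2 _)
  obtain ⟨E3, g', h', hT3⟩ := distinguished_cocone_triangle φ
  obtain ⟨e3, h31, h32⟩ := tri_mor3 hT3 hT e1 e2 hφ.symm
  have hE3 : E3 ∈ gInt C G (-(2 * k + A + 2) - n) (b + 1) :=
    SE_star ⟨_, _, _, _, _, tri_rot hT3, gInt_mono (by omega) (by omega) hE2,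
      gInt_mono (by omega) (by omega) (gInt_shift c.gs hE1).1⟩
  refine star_of_eqMod (c.orth n) e3 hE3 ?_
  refine eqMod_mid (tri_rot hT3) (tri_rot hT) h31 h32 ?_
    (eqMod_of_cone hT2 (R_anti c.met (by omega) hD2)) (eqMod_shift hT1 (R_shift1 c.met le_rfl hD1))
  rw [Preadditive.neg_comp, Preadditive.comp_neg, ← Functor.map_comp, ← Functor.map_comp, hφ]

lemma Ctx.Gd_X (c : Ctx G Rm A T) {k b : ℤ} (hk : 0 ≤ k) {P Q S : C}
    (h1 : (P ⊞ Q) ∈ Gd G Rm k b) (h2 : (Q ⊞ S) ∈ Gd G Rm k b) :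
    (P ⊞ S⟦(1 : ℤ)⟧) ∈ Gd G Rm (2 * k + A + 2) (b + 1) := by
  have hz := isZero_zero C
  obtain ⟨f, g, h, hT⟩ := tri_biprod (tri_zero_right (Y := Q) hz) (tri_rot (tri_zero_right (Y := S) hz))
  obtain ⟨f', g', h', hT'⟩ := tri_biprod (tri_zero_left (Y := P) hz) hT
  obtain ⟨e1⟩ := zero_biprod_iso (X := Q ⊞ S) hz
  obtain ⟨e2⟩ := biprod_zero_iso (X := Q) hz
  obtain ⟨e3⟩ := zero_biprod_iso (X := S⟦(1 : ℤ)⟧) hz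
  exact c.Gd_cone hk (tri_congr hT' e1 (biprod.mapIso (Iso.refl P) e2)
    (biprod.mapIso (Iso.refl P) e3)) h2 h1

lemma smd_complement {P : Set C} {K : C} (hK : K ∈ smd C P) :
    ∃ V ∈ P, ∃ X, Nonempty (V ≅ K ⊞ X) := by
  obtain ⟨V, hV, i, r, w⟩ := hK
  obtain ⟨X, g, h, hT⟩ := distinguished_cocone_triangle i
  have hh : h = 0 := by
    have h1 := tri_31 hT
    have h2 : h ≫ i⟦(1 : ℤ)⟧' ≫ r⟦(1 : ℤ)⟧' = 0 := by rw [← Category.assoc, h1, zero_comp]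
    rwa [← Functor.map_comp, w, CategoryTheory.Functor.map_id, Category.comp_id] at h2
  obtain ⟨e, _⟩ := exists_iso_binaryBiproduct_of_distTriang _ hT hh
  exact ⟨V, hV, X, ⟨e⟩⟩

/-- The uniform estimate for `K ⊞ K⟦s⟧`. -/
def HH (G Rm : ℤ → Set C) (s : ℤ) : Prop :=
  ∃ c : ℤ, 0 ≤ c ∧ ∀ i : ℤ, ∀ K ∈ compacts C ∩ Rm i, (K ⊞ K⟦s⟧) ∈ Gd G Rm c (c - i)

lemma Ctx.HH_one (c : Ctx G Rm A T) : HH G Rm 1 := by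
  have hA := c.pre.A_pos
  refine ⟨2 * (3 * A) + A + 2, by omega, ?_⟩
  rintro i K ⟨hK, hKR⟩
  obtain ⟨V, hV, X, ⟨e⟩⟩ := smd_complement (c.retract_DD hK hKR)
  have h1 : V ∈ Gd G Rm (3 * A) (A - i) := by
    intro n
    have := hV.2 n
    rwa [neg_mul] at this
  exact Gd_mono le_rfl (by omega) (c.Gd_X (by omega) (Gd_iso e h1)
    (Gd_iso (e ≪≫ biprod.braiding _ _) h1))

/-- Iterated shifts. -/
noncomputable def shIso (X : C) (a b d : ℤ) (h : a + b = d) : X⟦a⟧⟦b⟧ ≅ X⟦d⟧ :=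
  ((shiftFunctorAdd' C a b d h).app X).symm

noncomputable def shIso0 (X : C) (a b : ℤ) (h : a + b = 0) : X⟦a⟧⟦b⟧ ≅ X :=
  (shiftFunctorCompIsoId C a b h).app X

lemma Ctx.HH_up (c : Ctx G Rm A T) {s : ℤ} (h : HH G Rm s) : HH G Rm (s + 2) := by
  have hA := c.pre.A_pos
  obtain ⟨k, hk, h⟩ := h
  obtain ⟨l, hl, h1⟩ := c.HH_one
  have hs := abs_nonneg s
  refine ⟨2 * (k + l + |s|) + A + 2, by omega, ?_⟩
  rintro i K ⟨hK, hKR⟩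
  have a1 : (K ⊞ K⟦s⟧) ∈ Gd G Rm (k + l + |s|) (k + l + |s| - i) :=
    Gd_mono (by omega) (by omega) (h i K ⟨hK, hKR⟩)
  have a2 : (K⟦s⟧ ⊞ K⟦s + 1⟧) ∈ Gd G Rm (k + l + |s|) (k + l + |s| - i) :=
    Gd_iso (biprod.mapIso (Iso.refl _) (shIso K s 1 (s + 1) rfl))
      (Gd_mono (by omega) (by omega) (h1 (i - |s|) (K⟦s⟧)
        ⟨compacts_shift c.gs hK s, R_shift c.met hKR s (by omega)⟩))
  exact Gd_iso (biprod.mapIso (Iso.refl _) (shIso K (s + 1) 1 (s + 2) (by ring)))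
    (Gd_mono (by omega) (by omega) (c.Gd_X (by omega) a1 a2))

lemma Ctx.HH_down (c : Ctx G Rm A T) {s : ℤ} (h : HH G Rm s) : HH G Rm (s - 2) := by
  have hA := c.pre.A_pos
  obtain ⟨k, hk, h⟩ := h
  obtain ⟨l, hl, h1⟩ := c.HH_one
  have hs := abs_nonneg (s - 2)
  refine ⟨2 * (k + l + |s - 2| + 1) + A + 2, by omega, ?_⟩
  rintro i K ⟨hK, hKR⟩
  have a1 : (K⟦s - 2⟧ ⊞ K⟦s - 1⟧) ∈ Gd G Rm (k + l + |s - 2| + 1) (k + l + |s - 2| + 1 - i) :=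
    Gd_iso (biprod.mapIso (Iso.refl _) (shIso K (s - 2) 1 (s - 1) (by ring)))
      (Gd_mono (by omega) (by omega) (h1 (i - |s - 2|) (K⟦s - 2⟧)
        ⟨compacts_shift c.gs hK _, R_shift c.met hKR _ (by omega)⟩))
  have a2 : (K⟦s - 1⟧ ⊞ K⟦(-1 : ℤ)⟧) ∈ Gd G Rm (k + l + |s - 2| + 1) (k + l + |s - 2| + 1 - i) :=
    Gd_iso (biprod.mapIso (Iso.refl _) (shIso K (-1) s (s - 1) (by ring)) ≪≫ biprod.braiding _ _)
      (Gd_mono (by omega) (by omega) (h (i - 1) (K⟦(-1 : ℤ)⟧)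
        ⟨compacts_shift c.gs hK _, R_shiftm1 c.met (by omega) hKR⟩))
  exact Gd_iso (biprod.mapIso (Iso.refl _) (shIso0 K (-1) 1 (by ring)) ≪≫ biprod.braiding _ _)
    (Gd_mono (by omega) (by omega) (c.Gd_X (by omega) a1 a2))

lemma Ctx.HH_odd (c : Ctx G Rm A T) (k : ℤ) : HH G Rm (2 * k + 1) := by
  induction k using Int.induction_on with
  | zero => simpa using c.HH_one
  | succ k ih =>
    have := c.HH_up ih
    have e : 2 * (k : ℤ) + 1 + 2 = 2 * ((k : ℤ) + 1) + 1 := by ring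
    rwa [e] at this
  | pred k ih =>
    have := c.HH_down ih
    have e : 2 * (-(k : ℤ)) + 1 - 2 = 2 * (-(k : ℤ) - 1) + 1 := by ring
    rwa [e] at this

lemma Ctx.HH_unif (c : Ctx G Rm A T) (N : ℕ) : ∃ l : ℤ, 0 ≤ l ∧ ∀ k : ℤ, |k| ≤ N →
    ∀ i : ℤ, ∀ K ∈ compacts C ∩ Rm i, (K ⊞ K⟦2 * k + 1⟧) ∈ Gd G Rm l (l - i) := by
  induction N with
  | zero =>
    obtain ⟨l, hl, h⟩ := c.HH_odd 0
    refine ⟨l, hl, fun k hk => ?_⟩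
    have : k = 0 := by simpa using hk
    subst this
    exact h
  | succ N ih =>
    obtain ⟨l, hl, h⟩ := ih
    obtain ⟨l1, hl1, h1⟩ := c.HH_odd (N + 1)
    obtain ⟨l2, hl2, h2⟩ := c.HH_odd (-(N + 1))
    refine ⟨l + l1 + l2, by omega, fun k hk i K hK => ?_⟩
    push_cast at hk
    rcases lt_or_eq_of_le hk with hk | hk
    · exact Gd_mono (by omega) (by omega) (h k (by omega) i K hK)
    · rcases (abs_eq (by omega)).1 hk with rfl | rfl
      · exact Gd_mono (by omega) (by omega) (h1 i K hK)
      · exact Gd_mono (by omega) (by omega) (h2 i K hK)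

lemma Ctx.cond0_iter (c : Ctx G Rm A T) (t : ℕ) : ∀ (i : ℤ) (K : C), K ∈ MG C G i →
    ∃ n : ℤ, |n| ≤ A * t ∧ ∃ K' ∈ MG C G (i + t), Nonempty (K ≅ K'⟦n⟧) := by
  induction t with
  | zero =>
    intro i K hK
    refine ⟨0, by simp, K, by simpa using hK, ⟨((shiftFunctorZero C ℤ).app K).symm⟩⟩
  | succ t ih =>
    intro i K hK
    have h1 := c.pre.cond0 i hK
    simp only [Set.mem_iUnion, Set.mem_ofPred_eq] at h1
    obtain ⟨n, hn, K1, hK1, ⟨e⟩⟩ := h1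
    obtain ⟨m, hm, K2, hK2, ⟨e2⟩⟩ := ih _ _ hK1
    refine ⟨m + n, ?_, K2, ?_, ⟨e ≪≫ (shiftFunctor C n).mapIso e2 ≪≫ shIso K2 m n _ rfl⟩⟩
    · refine le_trans (abs_add_le m n) ?_
      push_cast
      linarith
    · have : i + 1 + (t : ℤ) = i + ((t + 1 : ℕ) : ℤ) := by push_cast; ring
      rwa [this] at hK2

/-- The first half of the theorem. -/
lemma Ctx.part1 (c : Ctx G Rm A T) : ∃ B : ℤ, 0 < B ∧ ∀ i : ℤ, ∀ K ∈ compacts C ∩ Rm i,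
    approxTriangle C K (gInt C G (-B - i) (B - i)) (Rm (i + 1)) := by
  have hA := c.pre.A_pos
  obtain ⟨a, rfl⟩ := Int.eq_ofNat_of_zero_le hA.le
  obtain ⟨l, hl, h⟩ := c.HH_unif (a * (2 * a + 3) + 1)
  refine ⟨l + 1, by omega, ?_⟩
  rintro i K ⟨hK, hKR⟩
  obtain ⟨V, hV, p, r, w⟩ := c.retract_DD hK hKR
  have hKM : K ∈ MG C G (i - a) := by
    have : gIic C G (a - i) = MG C G (i - a) := by unfold MG; congr 1; ring
    rw [← this]
    exact SE_retract hV.1 p r w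
  obtain ⟨n, hn, K', hK', ⟨e⟩⟩ := c.cond0_iter (2 * a + 3) _ _ hKM
  have hK'R : K' ∈ Rm (i + 3) := c.gIic_le_R (by push_cast; omega) hK'
  have hKn : K⟦-n⟧ ∈ Rm (i + 3) :=
    c.met.iso_closed _ (((shiftFunctor C (-n)).mapIso e ≪≫ shIso0 K' n (-n) (by ring)).symm) hK'R
  obtain ⟨k, hk, hks⟩ : ∃ k : ℤ, |k| ≤ ((a * (2 * a + 3) + 1 : ℕ) : ℤ) ∧
      K⟦2 * k + 1⟧ ∈ Rm (i + 2) := by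
    rcases Int.even_or_odd' (-n) with ⟨k, hk | hk⟩
    · refine ⟨k, ?_, ?_⟩
      · push_cast at hn ⊢
        have : |n| = 2 * |k| := by rw [← abs_neg, hk, abs_mul]; simp
        have := abs_nonneg k
        linarith
      · exact c.met.iso_closed _ (shIso K (-n) 1 (2 * k + 1) (by rw [hk]))
          (R_shift1 c.met (by omega) hKn)
    · refine ⟨k, ?_, ?_⟩
      · push_cast at hn ⊢
        have h2 : |2 * k| ≤ |n| + 1 := by
          have : 2 * k = -n - 1 := by omega
          rw [this, ← abs_neg n]
          exact le_trans (abs_sub _ _) (by simp)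
        rw [abs_mul] at h2
        simp at h2
        have := abs_nonneg k
        linarith
      · rw [← hk]
        exact R_anti c.met (by omega) hKn
  obtain ⟨E, D, f, g, δ, hT, hE, hD⟩ := h k hk i K ⟨hK, hKR⟩ (i + 1)
  have hf := eqMod_comp (eqMod_of_cone hT hD)
    (eqMod_biprod_fst (X := K) (R_shift1 c.met (by omega) hks))
  exact star_of_eqMod (c.orth (i + 1)) _ (gInt_mono (by omega) (by omega) hE) hf

end Aux6

section Aux7
variable {C}
variable {G Rm : ℤ → Set C} {A : ℤ} {T : Set C}

/-! ### finite coproducts -/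

lemma add_of_fintype {U : Set C} {ι : Type v} [Fintype ι] (f : ι → C) (hf : ∀ i, f i ∈ U) {X : C}
    (e : X ≅ ∐ f) : X ∈ addClosure C U := by
  let ε : ULift.{v} (Fin (Fintype.card ι)) ≃ ι := Equiv.ulift.trans (Fintype.equivFin ι).symm
  exact ⟨Fintype.card ι, f ∘ ε, fun i => hf _, ⟨e ≪≫ (Sigma.reindex ε f).symm⟩⟩

lemma add_zero_mem {U : Set C} {X : C} (hX : IsZero X) : X ∈ addClosure C U := by
  have h : IsZero (∐ (PEmpty.elim : PEmpty.{v + 1} → C)) := by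
    rw [IsZero.iff_id_eq_zero]
    exact Sigma.hom_ext _ _ (fun b => b.elim)
  exact add_of_fintype (PEmpty.elim : PEmpty.{v + 1} → C) (fun i => i.elim) (hX.iso h)

lemma add_of {U : Set C} {X : C} (hX : X ∈ U) : X ∈ addClosure C U := by
  refine add_of_fintype (ι := PUnit.{v + 1}) (fun _ => X) (fun _ => hX) ?_
  exact
    { hom := Sigma.ι (fun _ : PUnit.{v + 1} => X) PUnit.unit
      inv := Sigma.desc (fun _ => 𝟙 X)
      hom_inv_id := by simp
      inv_hom_id := Sigma.hom_ext _ _ (fun b => by simp) }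

lemma biprod_sigma_iso {ι κ : Type v} (f : ι → C) (g : κ → C) :
    Nonempty (((∐ f) ⊞ (∐ g)) ≅ ∐ (Sum.elim f g)) := by
  obtain ⟨a, ha⟩ : ∃ a : (∐ f) ⟶ ∐ (Sum.elim f g),
      ∀ i, Sigma.ι f i ≫ a = Sigma.ι (Sum.elim f g) (Sum.inl i) :=
    ⟨Sigma.desc (fun i => Sigma.ι (Sum.elim f g) (Sum.inl i)), fun i => Sigma.ι_desc _ _⟩
  obtain ⟨b, hb⟩ : ∃ b : (∐ g) ⟶ ∐ (Sum.elim f g),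
      ∀ i, Sigma.ι g i ≫ b = Sigma.ι (Sum.elim f g) (Sum.inr i) :=
    ⟨Sigma.desc (fun i => Sigma.ι (Sum.elim f g) (Sum.inr i)), fun i => Sigma.ι_desc _ _⟩
  let φ : ∀ i, Sum.elim f g i ⟶ (∐ f) ⊞ (∐ g) := fun i => match i with
        | Sum.inl i => Sigma.ι f i ≫ biprod.inl
        | Sum.inr i => Sigma.ι g i ≫ biprod.inr
  obtain ⟨d, hd⟩ : ∃ d : (∐ (Sum.elim f g)) ⟶ (∐ f) ⊞ (∐ g),
      ∀ i, Sigma.ι (Sum.elim f g) i ≫ d = φ i :=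
    ⟨Sigma.desc φ, fun i => Sigma.ι_desc _ _⟩
  have hd1 : ∀ i, Sigma.ι (Sum.elim f g) (Sum.inl i) ≫ d = Sigma.ι f i ≫ biprod.inl :=
    fun i => hd (Sum.inl i)
  have hd2 : ∀ i, Sigma.ι (Sum.elim f g) (Sum.inr i) ≫ d = Sigma.ι g i ≫ biprod.inr :=
    fun i => hd (Sum.inr i)
  refine ⟨⟨biprod.desc a b, d, ?_, ?_⟩⟩
  · apply biprod.hom_ext'
    · refine Sigma.hom_ext _ _ (fun i => ?_)
      rw [biprod.inl_desc_assoc, ← Category.assoc, ha, Category.comp_id]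
      exact hd1 i
    · refine Sigma.hom_ext _ _ (fun i => ?_)
      rw [biprod.inr_desc_assoc, ← Category.assoc, hb, Category.comp_id]
      exact hd2 i
  · refine Sigma.hom_ext _ _ (fun i => ?_)
    rcases i with i | i
    · rw [Category.comp_id, ← Category.assoc, hd1]
      exact (Category.assoc _ _ _).trans ((congrArg (fun t => _ ≫ t) (biprod.inl_desc _ _)).trans (ha i))
    · rw [Category.comp_id, ← Category.assoc, hd2]
      exact (Category.assoc _ _ _).trans ((congrArg (fun t => _ ≫ t) (biprod.inr_desc _ _)).trans (hb i))

lemma add_biClosed {U : Set C} : BiClosed (addClosure C U) := by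
  rintro X ⟨n, f, hf, ⟨e⟩⟩ Y ⟨m, g, hg, ⟨e'⟩⟩
  exact add_of_fintype (Sum.elim f g) (by rintro (i | i); exacts [hf i, hg i])
    (biprod.mapIso e e' ≪≫ (biprod_sigma_iso f g).some)

lemma sigma_id {ι : Type v} [Fintype ι] [DecidableEq ι] (f : ι → C) :
    (𝟙 (∐ f)) = ∑ i : ι, Sigma.π f i ≫ Sigma.ι f i := by
  refine Sigma.hom_ext _ _ (fun j => ?_)
  rw [Category.comp_id, Preadditive.comp_sum, Finset.sum_eq_single j]
  · rw [Sigma.ι_π_eq_id_assoc]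
  · intro i _ hij
    rw [Sigma.ι_π_of_ne_assoc _ hij.symm, zero_comp]
  · intro h
    exact absurd (Finset.mem_univ j) h

lemma add_le_SE {U : Set C} : addClosure C U ⊆ SE U := by
  rintro X ⟨n, f, hf, ⟨e⟩⟩
  refine SE_iso e.symm ?_
  have key : ∃ P ∈ SE U, ∃ (u : (∐ f) ⟶ P) (v : P ⟶ ∐ f), u ≫ v = 𝟙 (∐ f) := by
    rw [sigma_id]
    refine Finset.sum_induction _
      (fun g => ∃ P ∈ SE U, ∃ (u : (∐ f) ⟶ P) (v : P ⟶ ∐ f), u ≫ v = g) ?_ ?_ ?_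
    · intro a b ha hb
      exact fac_add SE_biClosed ha hb
    · exact ⟨_, SE_zero (isZero_zero C), 0, 0, by simp⟩
    · intro i _
      exact ⟨f i, SE_of (hf i), _, _, rfl⟩
  obtain ⟨P, hP, u, v, w⟩ := key
  exact SE_retract hP u v w

lemma add_mono {U V : Set C} (h : U ⊆ V) : addClosure C U ⊆ addClosure C V := by
  rintro X ⟨n, f, hf, e⟩
  exact ⟨n, f, fun i => h (hf i), e⟩

lemma pow_mono_set {U V : Set C} (h : U ⊆ V) (n : ℕ) : coprodPow C U n ⊆ coprodPow C V n := by
  induction n with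
  | zero => exact subset_rfl
  | succ n ih => exact star_mono (add_mono h) ih

lemma pow_mono {U : Set C} {n m : ℕ} (h : n ≤ m) : coprodPow C U n ⊆ coprodPow C U m := by
  induction h with
  | refl => exact subset_rfl
  | step _ ih =>
    exact fun X hX => star_zero_left (ih hX) ⟨_, add_zero_mem (isZero_zero C), isZero_zero C⟩

lemma pow_le_SE {U : Set C} (n : ℕ) : coprodPow C U n ⊆ SE U := by
  induction n with
  | zero => exact fun X hX => SE_zero hX
  | succ n ih => exact subset_trans (star_mono add_le_SE ih) SE_star

lemma pow_biClosed {U : Set C} (n : ℕ) : BiClosed (coprodPow C U n) := by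
  induction n with
  | zero =>
    intro X hX Y hY
    exact IsZero.of_iso hX (biprod_zero_iso hY).some
  | succ n ih => exact biClosed_star add_biClosed ih

lemma powBig_le_Fac (hG : IsGenSeq C G) {U : Set C} (hU : SE U ⊆ compacts C) (n : ℕ) :
    coprodPowBig C U n ⊆ Fac (coprodPow C U n) := by
  induction n with
  | zero => exact fun X hX => Fac_self hX
  | succ n ih =>
    refine subset_trans (star_mono ?_ ih)
      (Fac_star hG add_biClosed (subset_trans (pow_le_SE n) hU))
    rintro X ⟨α, f, hf, ⟨e⟩⟩
    exact Fac_iso e.symm (Fac_coprod add_biClosed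
      ⟨_, add_zero_mem (isZero_zero C), isZero_zero C⟩ f (fun i => Fac_self (add_of (hf i))))

/-- Associativity of the star operation up to direct summands. -/
lemma star_assoc_smd {S : Set C} {X1 X X2 Y V : C} {x : X1 ⟶ X} {y : X ⟶ X2}
    {z : X2 ⟶ X1⟦(1 : ℤ)⟧} (hT : Triangle.mk x y z ∈ (distTriang C))
    {f : X ⟶ Y} {g : Y ⟶ V} {h : V ⟶ X⟦(1 : ℤ)⟧} (hT' : Triangle.mk f g h ∈ (distTriang C))
    (hS : (X1 ⊞ X1) ∈ S) : Y ∈ smd C (starSet C S (starSet C {X2} {V})) := by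
  obtain ⟨P, p, δ, hP⟩ := distinguished_cocone_triangle (x ≫ f)
  obtain ⟨c, hc1, hc2⟩ := tri_mor3 hT hP (𝟙 X1) f (by rw [Category.id_comp])
  obtain ⟨Q, u, v, hQ⟩ := distinguished_cocone_triangle₂ (h ≫ y⟦(1 : ℤ)⟧')
  obtain ⟨q, hq, _⟩ := tri_mor2 hQ (tri_zero_right (Y := P) (isZero_zero C)) c 0 (by
    rw [Category.assoc, ← Functor.map_comp, hc1, Functor.map_comp, ← Category.assoc, tri_31 hT',
      zero_comp, zero_comp])
  rw [Category.comp_id] at hq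
  obtain ⟨s, hs1, hs2⟩ := tri_mor2 hT' hQ y (𝟙 V) (by rw [Category.id_comp])
  rw [Category.comp_id] at hs2
  obtain ⟨w, hw⟩ := tri_yon2 hT' (p - s ≫ q) (by
    rw [Preadditive.comp_sub, reassoc_of% hs1, hq, hc1, sub_self])
  have hq' : s ≫ (q + v ≫ w) = p := by
    rw [Preadditive.comp_add, ← Category.assoc s v, ← hs2, ← hw]
    abel
  obtain ⟨Y1, i, j, hY1⟩ := distinguished_cocone_triangle₂ ((q + v ≫ w) ≫ δ)
  obtain ⟨b, hb1, hb2⟩ := tri_mor2 hY1 hP (𝟙 X1) (q + v ≫ w) (by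
    rw [CategoryTheory.Functor.map_id, Category.comp_id])
  obtain ⟨l, hl⟩ := tri_coy3 hY1 s (by rw [← Category.assoc, hq', tri_23 hP])
  obtain ⟨m, hm⟩ := tri_coy2 hP (𝟙 Y - l ≫ b) (by
    rw [Preadditive.sub_comp, Category.assoc, ← hb2, ← Category.assoc l j, ← hl, hq',
      Category.id_comp, sub_self])
  refine ⟨Y1 ⊞ X1, star_biprod_left hY1 hS ⟨X2, V, u, v, _, hQ, rfl, rfl⟩, biprod.lift l m,
    biprod.desc b (x ≫ f), ?_⟩
  rw [biprod.lift_desc, ← hm]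
  abel

lemma pow_star {U : Set C} (a b : ℕ) :
    starSet C (coprodPow C U a) (coprodPow C U b) ⊆ smd C (coprodPow C U (a + b)) := by
  induction a with
  | zero =>
    rintro Y ⟨X, Z, f, g, h, hT, hX, hZ⟩
    have hX' : IsZero X := hX
    obtain ⟨r, hr⟩ := tri_coy3 hT (𝟙 Z) ((IsZero.eq_of_tgt
      ((shiftFunctor C (1 : ℤ)).map_isZero hX') _ _))
    obtain ⟨l, hl⟩ := tri_yon2 hT (𝟙 Y) (hX'.eq_of_src _ _)
    rw [Nat.zero_add]
    exact ⟨Z, hZ, g, l, hl.symm⟩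
  | succ a ih =>
    rintro Y ⟨X, V, f, g, h, hT', ⟨X1, X2, x, y, z, hT, hX1, hX2⟩, hV⟩
    have h1 := star_assoc_smd hT hT' (add_biClosed _ hX1 _ hX1)
    have e : a + 1 + b = (a + b) + 1 := by ring
    rw [e]
    refine smd_smd (smd_mono ?_ h1)
    refine subset_trans (star_mono smd_self (subset_trans (star_mono
      (Set.singleton_subset_iff.2 hX2) (Set.singleton_subset_iff.2 hV)) ih)) star_smd

/-- `G^{[-N-i,N-i]}` is uniformly contained in some `G^{[-B-i,B-i]}_B`. -/
lemma Ctx.gInt_le_pow (c : Ctx G Rm A T)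
    (happ : ∀ i : ℤ, ∀ F ∈ Rm i ∩ T,
      approxTriangle C F (gBarIntPow C G (-A - i) (A - i) A) (Rm (i + 1) ∩ T))
    (N : ℤ) (hN : 0 < N) : ∃ B : ℤ, 0 < B ∧ ∀ i : ℤ,
      gInt C G (-N - i) (N - i) ⊆ gIntPow C G (-B - i) (B - i) B := by
  have hA := c.pre.A_pos
  obtain ⟨m, hm⟩ := Int.eq_ofNat_of_zero_le (show 0 ≤ 2 * N + 2 * A by omega)
  have hB : (0 : ℤ) ≤ ((m * A.toNat : ℕ) : ℤ) := Int.natCast_nonneg _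
  refine ⟨N + 2 * A + ((m * A.toNat : ℕ) : ℤ), by omega, ?_⟩
  intro i Z hZ
  have hle : ∀ a b : ℤ, SE (unionIcc C G a b) ⊆ compacts C := fun a b => gInt_le_compacts c.gs
  have key := tower_retract c.gs c.pre.orthMetric c.cpt
    (Q := fun j => coprodPow C (unionIcc C G (-A - j) (A - j)) A.toNat)
    (D := fun m j => smd C (coprodPow C (unionIcc C G (-A - j - m) (A - j)) (m * A.toNat)))
    ?_ (fun j => pow_biClosed _) ?_ ?_ ?_ m (i - N - A) (gInt_le_compacts c.gs hZ)
    (c.gIic_le_R (b := N - i) (by omega) (gInt_le_gIic le_rfl hZ)) ?_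
  · refine smd_mono ?_ (smd_smd key)
    refine subset_trans (pow_mono_set (unionIcc_mono (by omega) (by omega)) _) (pow_mono ?_)
    rw [Int.le_toNat (by omega)]
    omega
  · intro j F hF
    obtain ⟨E, D, f, g, h, hT, hE, hD⟩ := happ j F hF
    exact ⟨E, D, f, g, h, hT, Fac_smd (smd_mono (powBig_le_Fac c.gs (hle _ _) _) hE), hD⟩
  · intro m j X hX
    exact hle _ _ (smd_smd (smd_mono (pow_le_SE _) hX))
  · intro j O hO
    refine smd_self ?_
    rw [Nat.zero_mul]
    exact hO
  · intro m j
    have e : (m + 1) * A.toNat = A.toNat + m * A.toNat := by ring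
    rw [e]
    have u1 : unionIcc C G (-A - j) (A - j) ⊆
        unionIcc C G (-A - j - ((m + 1 : ℕ) : ℤ)) (A - j) :=
      unionIcc_mono (by push_cast; omega) le_rfl
    have u2 : unionIcc C G (-A - (j + 1) - (m : ℤ)) (A - (j + 1)) ⊆
        unionIcc C G (-A - j - ((m + 1 : ℕ) : ℤ)) (A - j) :=
      unionIcc_mono (by push_cast; omega) (by omega)
    refine subset_trans (star_mono (subset_trans (pow_mono_set u1 _) smd_self)
      (smd_mono (pow_mono_set u2 _))) ?_
    exact subset_trans star_smd (subset_trans (smd_mono (pow_star _ _)) smd_smd)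
  · intro D hD f
    exact gInt_hom c.hv (by omega) hZ hD f

lemma Ctx.part2 (c : Ctx G Rm A T)
    (happ : ∀ i : ℤ, ∀ F ∈ Rm i ∩ T,
      approxTriangle C F (gBarIntPow C G (-A - i) (A - i) A) (Rm (i + 1) ∩ T)) :
    ∃ B : ℤ, 0 < B ∧ ∀ i : ℤ, ∀ K ∈ compacts C ∩ Rm i,
      approxTriangle C K (gIntPow C G (-B - i) (B - i) B) (Rm (i + 1)) := by
  obtain ⟨N, hN, h⟩ := c.part1
  obtain ⟨B, hB, h'⟩ := c.gInt_le_pow happ N hN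
  refine ⟨B, hB, fun i K hK => ?_⟩
  obtain ⟨E, D, f, g, k, hT, hE, hD⟩ := h i K hK
  exact ⟨E, D, f, g, k, hT, h' i hE, hD⟩

lemma compacts_le_clos (hR : IsExtGoodMetric C Rm) : compacts C ⊆ closCompacts C Rm := by
  intro K hK
  refine Set.mem_iInter.2 (fun n => ?_)
  exact ⟨K, _, _, _, _, tri_zero_right (isZero_zero C), hK, hR.zero_mem n _ (isZero_zero C)⟩

lemma ctx_quasi (hG : IsGenSeq C G) (h : IsWeakGQuasiApprox C G Rm A) :
    Ctx G Rm A (closCompacts C Rm) :=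
  ⟨hG, h.toIsGPreApprox, h.hom_vanish,
    compacts_le_clos h.toIsGPreApprox.orthMetric.toIsExtGoodMetric, h.approx⟩

lemma ctx_approx (hG : IsGenSeq C G) (h : IsWeakGApprox C G Rm A) :
    Ctx G Rm A Set.univ :=
  ⟨hG, h.toIsGPreApprox, h.hom_vanish, Set.subset_univ _, fun i F hF => by
    rw [Set.inter_univ]
    exact h.approx i F hF.1⟩

end Aux7

theorem statement_16 (G Rm : ℤ → Set C) (A : ℤ)
    (hcg : CompactlyGenerated C) (hG : IsGenSeq C G)
    (h : IsWeakGQuasiApprox C G Rm A ∨ IsWeakGApprox C G Rm A) :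
    (∃ B : ℤ, 0 < B ∧ ∀ i : ℤ, ∀ K ∈ compacts C ∩ Rm i,
      approxTriangle C K (gInt C G (-B - i) (B - i)) (Rm (i + 1))) ∧
    ((IsGQuasiApprox C G Rm A ∨ IsGApprox C G Rm A) →
      ∃ B : ℤ, 0 < B ∧ ∀ i : ℤ, ∀ K ∈ compacts C ∩ Rm i,
        approxTriangle C K (gIntPow C G (-B - i) (B - i) B) (Rm (i + 1))) := by
  constructor
  · rcases h with h | h
    · exact (ctx_quasi hG h).part1
    · exact (ctx_approx hG h).part1
  · rintro (h | h)
    · exact (ctx_quasi hG h.toIsWeakGQuasiApprox).part2 h.approx'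
    · exact (ctx_approx hG h.toIsWeakGApprox).part2 (fun i F hF => by
        rw [Set.inter_univ]
        exact h.approx' i F hF.1)

end GApprox
end

section
/- Let (T, R, A) be weakly G-quasiapproximable or weakly G-approximable, and choose an integer B > 0 as in the compact-approximation lemma (i.e. B such that every K ∈ T^c ∩ R_i fits in a triangle E → K → D → ΣE with E ∈ G^{[-B-i,B-i]} and D ∈ R_{i+1}). Then for every integer i and every F ∈ T̄^c ∩ R_i there is a distinguished triangle E → F → D → ΣE with E ∈ G^{[-B-i, B-i]} and D ∈ R_{i+1}. If (T, R, A) is moreover G-quasiapproximable or G-approximable, one may take E ∈ G^{[-B-i, B-i]}_B. -/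
namespace GApprox

open CategoryTheory CategoryTheory.Limits CategoryTheory.Pretriangulated

universe w v u

variable (C : Type u) [Category.{v} C] [HasZeroObject C] [HasShift C ℤ]
  [Preadditive C] [∀ n : ℤ, (shiftFunctor C n).Additive] [Pretriangulated C]
  [HasCoproducts.{v} C]

theorem approx_aux (Rm : ℤ → Set C) (hR : IsOrthMetric C Rm) (i : ℤ) (S : Set C)
    (hS : ∀ K ∈ compacts C ∩ Rm i, approxTriangle C K S (Rm (i + 1)))
    (F : C) (hF : F ∈ closCompacts C Rm ∩ Rm i) :
    approxTriangle C F S (Rm (i + 1)) := by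
  obtain ⟨hFc, hFi⟩ := hF
  obtain ⟨K, Done, f, g, h, hT, hK, hDone⟩ := Set.mem_iInter.1 hFc (i + 1 + 1)
  have hD1 : Done ∈ Rm (i + 1) := hR.antitone _ hDone
  have hKi : K ∈ Rm i := by
    apply hR.star_subset i
    have hTinv := inv_rot_of_distTriang _ hT
    exact ⟨_, _, _, _, _, hTinv, hR.shift_neg_one i ⟨Done, hD1, ⟨Iso.refl _⟩⟩, hFi⟩
  obtain ⟨E, Dtwo, a, b, c, hT2, hE, hDtwo⟩ := hS K ⟨hK, hKi⟩
  obtain ⟨D, p, q, hT3⟩ := distinguished_cocone_triangle (a ≫ f)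
  refine ⟨E, D, a ≫ f, p, q, hT3, hE, ?_⟩
  rw [← hR.orth (i + 1)]
  intro Y hY φ
  -- the composite `F ⟶ D ⟶ Y` vanishes
  have h1 : p ≫ φ = 0 := by
    have e0 : (a ≫ f) ≫ p = 0 := comp_distTriang_mor_zero₁₂ _ hT3
    have e1 : a ≫ (f ≫ p ≫ φ) = 0 := by
      have : ((a ≫ f) ≫ p) ≫ φ = 0 := by rw [e0, zero_comp]
      simpa using this
    obtain ⟨s, hs⟩ : ∃ s : Dtwo ⟶ Y, f ≫ p ≫ φ = b ≫ s :=
      Triangle.yoneda_exact₂ _ hT2 (f ≫ p ≫ φ) e1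
    have e2 : f ≫ (p ≫ φ) = 0 := by
      rw [hs, hY Dtwo hDtwo s, comp_zero]
    obtain ⟨t, ht⟩ : ∃ t : Done ⟶ Y, p ≫ φ = g ≫ t :=
      Triangle.yoneda_exact₂ _ hT (p ≫ φ) e2
    rw [ht, hY Done hD1 t, comp_zero]
  obtain ⟨ψ, hψ⟩ : ∃ ψ : E⟦(1 : ℤ)⟧ ⟶ Y, φ = q ≫ ψ := Triangle.yoneda_exact₃ _ hT3 φ h1
  -- `ψ` factors through `ΣE ⟶ ΣK ⟶ ΣF`
  have h2 : c ≫ ψ = 0 := hY Dtwo hDtwo _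
  obtain ⟨s, hs⟩ : ∃ s : K⟦(1 : ℤ)⟧ ⟶ Y, ψ = (-a⟦(1 : ℤ)⟧') ≫ s :=
    Triangle.yoneda_exact₃ _ (rot_of_distTriang _ hT2) ψ h2
  have h3 : h ≫ s = 0 := hY Done hD1 _
  obtain ⟨t, ht⟩ : ∃ t : F⟦(1 : ℤ)⟧ ⟶ Y, s = (-f⟦(1 : ℤ)⟧') ≫ t :=
    Triangle.yoneda_exact₃ _ (rot_of_distTriang _ hT) s h3
  have e3 : q ≫ (a ≫ f)⟦(1 : ℤ)⟧' = 0 := comp_distTriang_mor_zero₃₁ _ hT3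
  have e4 : (q ≫ (a ≫ f)⟦(1 : ℤ)⟧') ≫ t = 0 := by rw [e3, zero_comp]
  rw [hψ, hs, ht]
  simpa using e4

theorem statement_17 (G Rm : ℤ → Set C) (A B : ℤ)
    (hcg : CompactlyGenerated C) (hG : IsGenSeq C G)
    (h : IsWeakGQuasiApprox C G Rm A ∨ IsWeakGApprox C G Rm A) (hB : 0 < B)
    (hBcompact : ∀ i : ℤ, ∀ K ∈ compacts C ∩ Rm i,
      approxTriangle C K (gInt C G (-B - i) (B - i)) (Rm (i + 1))) :
    (∀ i : ℤ, ∀ F ∈ closCompacts C Rm ∩ Rm i,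
      approxTriangle C F (gInt C G (-B - i) (B - i)) (Rm (i + 1))) ∧
    ((IsGQuasiApprox C G Rm A ∨ IsGApprox C G Rm A) →
      (∀ i : ℤ, ∀ K ∈ compacts C ∩ Rm i,
        approxTriangle C K (gIntPow C G (-B - i) (B - i) B) (Rm (i + 1))) →
      ∀ i : ℤ, ∀ F ∈ closCompacts C Rm ∩ Rm i,
        approxTriangle C F (gIntPow C G (-B - i) (B - i) B) (Rm (i + 1))) := by
  have hR : IsOrthMetric C Rm := h.elim (fun x => x.orthMetric) (fun x => x.orthMetric)
  exact ⟨fun i F hF => approx_aux C Rm hR i _ (hBcompact i) F hF,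
    fun _ hK i F hF => approx_aux C Rm hR i _ (hK i) F hF⟩

end GApprox
end
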